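/- If p and q are strictly positive probability vectors on finite alphabets with H(p) > H(q), then there exists a homomorphism (factor map) from the Bernoulli scheme BS(p) to the Bernoulli scheme BS(q). -/

import Mathlib

open MeasureTheory ENNReal Filter

noncomputable section

/-- The left shift transformation on bi-infinite sequences: `(shift x) n = x (n+1)`. -/
def shift {A : Type*} : (ℤ → A) → (ℤ → A) := fun x n => x (n + 1)

/-- `φ` is a homomorphism (factor map) from the shift system `(ℤ → A, μ, shift)` to
`(ℤ → B, ν, shift)`, defined on the shift-invariant full-measure domain `D`. -/
structure IsFactorMap {A B : Type*} [MeasurableSpace A] [MeasurableSpace B]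
    (μ : Measure (ℤ → A)) (ν : Measure (ℤ → B))
    (D : Set (ℤ → A)) (φ : (ℤ → A) → (ℤ → B)) : Prop where
  measurable_map : Measurable φ
  dom_measurable : MeasurableSet D
  dom_shift_invariant : shift ⁻¹' D = D
  dom_full : μ D = 1
  pushforward : ν = μ.map φ
  equivariant : ∀ x ∈ D, φ (shift x) = shift (φ x)

/-- The window `[-q, r]` of `x` determines the zero coordinate of the image under `φ`
(among points of the domain `D`). -/
def DeterminesAt {A B : Type*} (D : Set (ℤ → A)) (φ : (ℤ → A) → (ℤ → B))
    (q r : ℕ) (x : ℤ → A) : Prop :=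
  ∀ y ∈ D, (∀ i : ℤ, -(q : ℤ) ≤ i → i ≤ (r : ℤ) → y i = x i) → φ y 0 = φ x 0

/-- A homomorphism `φ` with domain `D` is finitary if for almost every `x` in the domain
there are nonnegative integers `q`, `r` such that the coordinates `x_{-q}, …, x_r`
determine `(φ x)_0`. -/
def IsFinitary {A B : Type*} [MeasurableSpace A] [MeasurableSpace B]
    (μ : Measure (ℤ → A)) (D : Set (ℤ → A)) (φ : (ℤ → A) → (ℤ → B)) : Prop :=
  ∀ᵐ x ∂μ, x ∈ D → ∃ q r : ℕ, DeterminesAt D φ q r x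

/-- The code length `C(x) = q(x) + r(x)` with `q(x), r(x)` minimal such that the window
`[-q(x), r(x)]` determines the zero output coordinate (`⊤` if no finite window works). -/
def codeLength {A B : Type*} (D : Set (ℤ → A)) (φ : (ℤ → A) → (ℤ → B))
    (x : ℤ → A) : ℝ≥0∞ :=
  ⨅ (q : ℕ) (r : ℕ) (_ : DeterminesAt D φ q r x), ((q : ℝ≥0∞) + (r : ℝ≥0∞))

/-- `μ` is the Bernoulli (product) measure on `(ℤ → A)` given by the probability vector `p`. -/
def IsBernoulliMeasure {A : Type*} [MeasurableSpace A] (μ : Measure (ℤ → A)) (p : A → ℝ) : Prop :=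
  ∀ (F : Finset ℤ) (s : ℤ → A),
    μ {x | ∀ i ∈ F, x i = s i} = ENNReal.ofReal (∏ i ∈ F, p (s i))

/-- A strictly positive probability vector on a finite alphabet. -/
def IsProbVector {A : Type*} [Fintype A] (p : A → ℝ) : Prop :=
  (∀ i, 0 < p i) ∧ ∑ i, p i = 1

/-- The entropy `H(p) = -∑ p_i log p_i` of a probability vector. -/
def vecEntropy {A : Type*} [Fintype A] (p : A → ℝ) : ℝ := -∑ i, p i * Real.log (p i)

/-- A finitary isomorphism: a pair of mutually inverse finitary factor maps. -/
def IsFinitaryIsomorphism {A B : Type*} [MeasurableSpace A] [MeasurableSpace B]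
    (μ : Measure (ℤ → A)) (ν : Measure (ℤ → B))
    (D : Set (ℤ → A)) (E : Set (ℤ → B))
    (φ : (ℤ → A) → (ℤ → B)) (ψ : (ℤ → B) → (ℤ → A)) : Prop :=
  IsFactorMap μ ν D φ ∧ IsFactorMap ν μ E ψ ∧
  IsFinitary μ D φ ∧ IsFinitary ν E ψ ∧
  (∀ x ∈ D, φ x ∈ E ∧ ψ (φ x) = x) ∧ (∀ y ∈ E, ψ y ∈ D ∧ φ (ψ y) = y)

/-!
Cut the one-sided future of a point of `BS(p)` into blocks at the occurrences of a long word `w`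
that does not overlap itself; the blocks are independent, and the average information of a block
is its average length times `H(p)`. Blocks with the same letter counts are equally likely, so the
position of a block among them yields, up to a bounded loss, as many fair bits as it carries
information, independently of the letter counts, and the letter counts themselves carry little
information: by Gibbs' inequality, coding them with a geometric reference law costs at most `ε` per
letter. The bits of each block are pushed onto a stack, and then bits are popped off it to generate
a word of independent letters of law `q` as long as the block. The input is processed backwards in
time, so that the stack seen by a block holds the unused bits of its future. Since `H(p) > H(q)`,
the stack grows on average, so an output word depends on finitely many future blocks and the limit
over later and later starting times exists. Replacing used bits by fresh ones preserves the law, so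
the output is i.i.d. of law `q`. The code of a block depends on its future only, which makes the
two-sided code, restarted at the last marker, shift-equivariant.
-/

namespace BernoulliFactor

/-! ### Words and sequences -/

section Words

variable {α : Type*}

/-- The word formed by the first `n` entries of a sequence. -/
def takeFirst (n : ℕ) (x : ℕ → α) : List α := List.ofFn fun i : Fin n => x i

/-- The sequence with its first `n` entries removed. -/
def dropFirst (n : ℕ) (x : ℕ → α) : ℕ → α := fun i => x (n + i)

/-- The sequence starting with the word `u` and continuing with `x`. -/
def prepend (u : List α) (x : ℕ → α) : ℕ → α := fun i =>
  if h : i < u.length then u[i] else x (i - u.length)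

@[simp] lemma length_takeFirst (n : ℕ) (x : ℕ → α) : (takeFirst n x).length = n := by
  simp [takeFirst]

@[simp] lemma takeFirst_zero (x : ℕ → α) : takeFirst 0 x = [] := by simp [takeFirst]

lemma dropFirst_dropFirst (m n : ℕ) (x : ℕ → α) :
    dropFirst m (dropFirst n x) = dropFirst (n + m) x := by
  funext i
  simp [dropFirst, add_assoc]

lemma takeFirst_add (m n : ℕ) (x : ℕ → α) :
    takeFirst (m + n) x = takeFirst m x ++ takeFirst n (dropFirst m x) := by
  simp [takeFirst, dropFirst, List.ofFn_add]

lemma takeFirst_succ (n : ℕ) (x : ℕ → α) : takeFirst (n + 1) x = takeFirst n x ++ [x n] := by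
  rw [takeFirst_add]
  simp [takeFirst, dropFirst]

lemma sum_map_takeFirst {M : Type*} [AddCommMonoid M] (f : α → M) (n : ℕ) (x : ℕ → α) :
    ((takeFirst n x).map f).sum = ∑ i ∈ Finset.range n, f (x i) := by
  rw [takeFirst, List.map_ofFn, List.sum_ofFn, Finset.sum_range]
  rfl

lemma takeFirst_inj {n : ℕ} {x y : ℕ → α} :
    takeFirst n x = takeFirst n y ↔ ∀ i < n, x i = y i := by
  simp [takeFirst, List.ofFn_inj, funext_iff, Fin.forall_iff]

lemma take_takeFirst {m n : ℕ} (h : m ≤ n) (x : ℕ → α) :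
    (takeFirst n x).take m = takeFirst m x := by
  obtain ⟨k, rfl⟩ := Nat.exists_eq_add_of_le h
  simp [takeFirst_add]

lemma prepend_of_lt_length {u : List α} {i : ℕ} (h : i < u.length) (x : ℕ → α) :
    prepend u x i = u[i] := by simp [prepend, h]

lemma prepend_of_length_le {u : List α} {i : ℕ} (h : u.length ≤ i) (x : ℕ → α) :
    prepend u x i = x (i - u.length) := by simp [prepend, h]

@[simp] lemma prepend_singleton_zero (a : α) (x : ℕ → α) : prepend [a] x 0 = a := rfl

@[simp] lemma prepend_singleton_succ (a : α) (x : ℕ → α) (i : ℕ) :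
    prepend [a] x (i + 1) = x i := by simp [prepend]

@[simp] lemma prepend_takeFirst_dropFirst (n : ℕ) (x : ℕ → α) :
    prepend (takeFirst n x) (dropFirst n x) = x := by
  funext i
  rcases lt_or_ge i n with h | h
  · simp [prepend, takeFirst, h]
  · simp [prepend, dropFirst, h]

variable [MeasurableSpace α]

instance measurableSpaceWord : MeasurableSpace (List α) := ⊤

instance discreteMeasurableSpaceWord : DiscreteMeasurableSpace (List α) := ⟨fun _ => trivial⟩

@[fun_prop]
lemma measurable_dropFirst (n : ℕ) : Measurable (dropFirst n : (ℕ → α) → ℕ → α) :=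
  measurable_pi_iff.2 fun i => measurable_pi_apply (n + i)

@[fun_prop]
lemma measurable_takeFirst [Countable α] [DiscreteMeasurableSpace α] (n : ℕ) :
    Measurable (takeFirst n : (ℕ → α) → List α) :=
  (Measurable.of_discrete (f := fun v : Fin n → α => List.ofFn v)).comp
    (measurable_pi_lambda _ fun i => measurable_pi_apply (i : ℕ))

lemma measurable_prepend [Countable α] :
    Measurable fun z : List α × (ℕ → α) => prepend z.1 z.2 :=
  measurable_from_prod_countable_right fun u => measurable_pi_iff.2 fun i => by
    rcases lt_or_ge i u.length with h | h
    · simp only [prepend_of_lt_length h, measurable_const]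
    · simpa only [prepend_of_length_le h] using measurable_pi_apply _

end Words

/-! ### Extensionality of measures -/

lemma measurableSet_cylinder {ι β : Type*} [MeasurableSpace β] [MeasurableSingletonClass β]
    (F : Finset ι) (t : ι → β) : MeasurableSet {y : ι → β | ∀ i ∈ F, y i = t i} := by
  have h : {y : ι → β | ∀ i ∈ F, y i = t i} = Set.pi (F : Set ι) fun i => {t i} := by
    ext y
    simp [Set.mem_pi]
  rw [h]
  exact .pi F.countable_toSet fun i _ => .singleton (t i)

lemma ext_of_cylinder_le {ι β : Type*} [Countable β] [MeasurableSpace β]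
    [DiscreteMeasurableSpace β] {m₁ m₂ : Measure (ι → β)} [IsProbabilityMeasure m₁]
    [IsProbabilityMeasure m₂]
    (h : ∀ (F : Finset ι) (t : ι → β),
      m₁ {x | ∀ i ∈ F, x i = t i} ≤ m₂ {x | ∀ i ∈ F, x i = t i}) : m₁ = m₂ := by
  classical
  have hproj (I : Finset ι) : m₁.map I.restrict = m₂.map I.restrict := by
    have hI : Measurable (I.restrict : (ι → β) → I → β) := Finset.measurable_restrict I
    have := Measure.isProbabilityMeasure_map (μ := m₁) hI.aemeasurable
    have := Measure.isProbabilityMeasure_map (μ := m₂) hI.aemeasurable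
    refine Measure.eq_of_le_of_measure_univ_eq (Measure.le_iff.2 fun s hs => ?_) (by simp)
    rw [← Measure.tsum_indicator_apply_singleton _ s hs,
      ← Measure.tsum_indicator_apply_singleton _ s hs]
    refine ENNReal.tsum_le_tsum fun y => Set.indicator_le_indicator ?_
    rw [Measure.map_apply hI (.singleton y), Measure.map_apply hI (.singleton y)]
    rcases isEmpty_or_nonempty (ι → β) with _ | ⟨⟨x₀⟩⟩
    · simp [Set.eq_empty_of_isEmpty]
    · have hy : (I.restrict : (ι → β) → I → β) ⁻¹' {y} =
          {x : ι → β | ∀ i ∈ I, x i = if hi : i ∈ I then y ⟨i, hi⟩ else x₀ i} := by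
        ext x
        simp only [Set.mem_preimage, Set.mem_singleton_iff, funext_iff, Finset.restrict,
          Subtype.forall, Set.mem_ofPred_eq]
        exact forall₂_congr fun i hi => by simp [hi]
      rw [hy]
      exact h I _
  exact IsProjectiveLimit.unique (P := fun I : Finset ι => m₂.map I.restrict) hproj fun _ => rfl

lemma ext_of_singleton_prod {κ Ω : Type*} [Countable κ] [MeasurableSpace κ]
    [MeasurableSingletonClass κ] [MeasurableSpace Ω] {m₁ m₂ : Measure (κ × Ω)} [IsFiniteMeasure m₁]
    (h : ∀ (k : κ) (E : Set Ω), MeasurableSet E → m₁ ({k} ×ˢ E) = m₂ ({k} ×ˢ E)) : m₁ = m₂ := by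
  have hfst (m : Measure (κ × Ω)) {s : Set κ} {t : Set Ω} (hs : MeasurableSet s) :
      (m.restrict (Set.univ ×ˢ t)).map Prod.fst s = m (s ×ˢ t) := by
    rw [Measure.map_apply measurable_fst hs, Measure.restrict_apply (measurable_fst hs),
      ← Set.prod_univ, Set.prod_inter_prod, Set.inter_univ, Set.univ_inter]
  refine Measure.ext_prod fun {s t} hs ht => ?_
  rw [← hfst m₁ hs, ← hfst m₂ hs]
  refine congrArg (· s) (Measure.ext_of_singleton fun k => ?_)
  rw [hfst m₁ (.singleton k), hfst m₂ (.singleton k), h k t ht]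

/-! ### Independent identically distributed sequences -/

/-- The law of a one-sided sequence of independent letters with common law `π`. -/
abbrev iid {α : Type*} [MeasurableSpace α] (π : Measure α) : Measure (ℕ → α) :=
  Measure.infinitePi fun _ : ℕ => π

section IID

variable {α : Type*} [MeasurableSpace α] (π : Measure α) [IsProbabilityMeasure π]

lemma measurePreserving_dropFirst (n : ℕ) : MeasurePreserving (dropFirst n) (iid π) (iid π) :=
  ⟨by fun_prop, Measure.map_infinitePi_infinitePi_of_inj (add_right_injective n)⟩

variable [DiscreteMeasurableSpace α]

lemma iid_takeFirst_eq (u : List α) :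
    iid π {x | takeFirst u.length x = u} = (u.map fun a => π {a}).prod := by
  have h : {x : ℕ → α | takeFirst u.length x = u} =
      Set.pi (Finset.range u.length) fun i => {a | u[i]? = some a} := by
    ext x
    refine ⟨fun hx i hi => ?_, fun hx => List.ext_getElem (length_takeFirst _ _) fun i _ hi => ?_⟩
    · have hi : i < u.length := Finset.mem_range.1 hi
      simp [← List.getElem_of_eq hx (by simpa using hi), takeFirst, hi]
    · simpa [takeFirst, eq_comm, hi] using hx i (Finset.mem_coe.2 (Finset.mem_range.2 hi))
  rw [h, Measure.infinitePi_pi _ fun i _ => .of_discrete, Finset.prod_range, ← List.prod_ofFn]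
  congr 1
  exact List.ext_getElem (by simp) fun i _ _ => by simp [eq_comm]

variable [Countable α]

instance isProbabilityMeasure_map_takeFirst (n : ℕ) :
    IsProbabilityMeasure ((iid π).map (takeFirst n)) :=
  Measure.isProbabilityMeasure_map (by fun_prop)

lemma indepFun_takeFirst_dropFirst (n : ℕ) :
    ProbabilityTheory.IndepFun (takeFirst n) (dropFirst n) (iid π) := by
  have hind : ProbabilityTheory.iIndepFun (fun (i : ℕ) (x : ℕ → α) => x i) (iid π) :=
    ProbabilityTheory.iIndepFun_infinitePi (X := fun _ => id) fun _ => measurable_id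
  have h := ProbabilityTheory.indep_iSup_of_disjoint
    (fun i => (measurable_pi_apply i).comap_le) hind.iIndep
    (Set.disjoint_left.2 fun i (hi : i < n) (hi' : n ≤ i) => (hi.trans_le hi').false)
  rw [ProbabilityTheory.IndepFun_iff_Indep]
  refine ProbabilityTheory.indep_of_indep_of_le_left
    (ProbabilityTheory.indep_of_indep_of_le_right h ?_) ?_
  · rw [← measurable_iff_comap_le]
    refine @measurable_pi_lambda _ _ _ (_) _ _ fun i => Measurable.mono
      (comap_measurable fun x : ℕ → α => x (n + i)) ?_ le_rfl
    exact le_iSup₂_of_le (n + i) (Nat.le_add_right n i) le_rfl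
  · rw [← measurable_iff_comap_le]
    refine (Measurable.of_discrete (f := fun v : Fin n → α => List.ofFn v)).comp
      (@measurable_pi_lambda _ _ _ (_) _ _ fun i => Measurable.mono
        (comap_measurable fun x : ℕ → α => x i) ?_ le_rfl)
    exact le_iSup₂_of_le (i : ℕ) i.2 le_rfl

lemma measurePreserving_takeFirst_dropFirst (n : ℕ) :
    MeasurePreserving (fun x => (takeFirst n x, dropFirst n x)) (iid π)
      (((iid π).map (takeFirst n)).prod (iid π)) := by
  refine ⟨by fun_prop, ?_⟩
  rw [(ProbabilityTheory.indepFun_iff_map_prod_eq_prod_map_map (by fun_prop) (by fun_prop)).1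
    (indepFun_takeFirst_dropFirst π n), (measurePreserving_dropFirst π n).map_eq]

lemma iid_takeFirst_eq_dropFirst_mem (u : List α) {E : Set (ℕ → α)} (hE : MeasurableSet E) :
    iid π {x | takeFirst u.length x = u ∧ dropFirst u.length x ∈ E} =
      iid π {x | takeFirst u.length x = u} * iid π E := by
  have h := (measurePreserving_takeFirst_dropFirst π u.length).measure_preimage
    ((MeasurableSet.singleton u).prod hE).nullMeasurableSet
  rwa [Measure.prod_prod, Measure.map_apply (by fun_prop) (MeasurableSet.singleton u)] at h

lemma measurePreserving_prepend (n : ℕ) :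
    MeasurePreserving (fun z : List α × (ℕ → α) => prepend z.1 z.2)
      (((iid π).map (takeFirst n)).prod (iid π)) (iid π) := by
  refine ⟨measurable_prepend, ?_⟩
  rw [← (measurePreserving_takeFirst_dropFirst π n).map_eq,
    Measure.map_map measurable_prepend (by fun_prop)]
  simp [Function.comp_def]

lemma measurePreserving_prepend_singleton :
    MeasurePreserving (fun z : α × (ℕ → α) => prepend [z.1] z.2) (π.prod (iid π)) (iid π) := by
  have h : MeasurePreserving (fun a : α => [a]) π ((iid π).map (takeFirst 1)) := by
    refine ⟨.of_discrete, ?_⟩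
    conv_lhs => rw [← Measure.infinitePi_map_eval (fun _ : ℕ => π) 0]
    rw [Measure.map_map (g := fun a : α => [a]) .of_discrete (measurable_pi_apply 0)]
    rfl
  exact (measurePreserving_prepend π 1).comp (h.prod (.id _))

end IID

/-- Given that `cl u = k`, the word `word u` consists of `N k` independent letters of law `π`. -/
def IsIIDWord {Ω κ α : Type*} [MeasurableSpace Ω] [MeasurableSpace α] (P : Measure Ω)
    (cl : Ω → κ) (N : κ → ℕ) (word : Ω → List α) (π : Measure α) : Prop :=
  ∀ k, (P.restrict (cl ⁻¹' {k})).map word = P (cl ⁻¹' {k}) • (iid π).map (takeFirst (N k))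

lemma IsIIDWord.measurePreserving_prepend {Ω κ α : Type*} [MeasurableSpace Ω] [Countable κ]
    [MeasurableSpace κ] [MeasurableSingletonClass κ] [Countable α] [MeasurableSpace α]
    [DiscreteMeasurableSpace α] {P : Measure Ω} [IsFiniteMeasure P] {π : Measure α}
    [IsProbabilityMeasure π] {cl : Ω → κ} {N : κ → ℕ} {word : Ω → List α}
    (h : IsIIDWord P cl N word π) (hcl : Measurable cl) (hword : Measurable word) :
    MeasurePreserving (fun z : Ω × (ℕ → α) => (cl z.1, prepend (word z.1) z.2)) (P.prod (iid π))
      ((P.map cl).prod (iid π)) := by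
  have hm : Measurable fun z : Ω × (ℕ → α) => (cl z.1, prepend (word z.1) z.2) :=
    (hcl.comp measurable_fst).prodMk
      (measurable_prepend.comp ((hword.comp measurable_fst).prodMk measurable_snd))
  refine ⟨hm, ext_of_singleton_prod fun k E hE => ?_⟩
  have hk : MeasurableSet (cl ⁻¹' {k}) := hcl (.singleton k)
  have hfib (u : Ω) : (iid π) (Prod.mk u ⁻¹' ((fun z : Ω × (ℕ → α) =>
      (cl z.1, prepend (word z.1) z.2)) ⁻¹' ({k} ×ˢ E))) =
      (cl ⁻¹' {k}).indicator (fun u => iid π (prepend (word u) ⁻¹' E)) u := by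
    by_cases hu : cl u = k <;> simp [Set.indicator, hu, Set.preimage, Set.mem_prod]
  have hprep := (BernoulliFactor.measurePreserving_prepend π (N k)).measure_preimage
    hE.nullMeasurableSet
  rw [Measure.prod_apply (measurable_prepend hE)] at hprep
  rw [Measure.map_apply hm ((MeasurableSet.singleton k).prod hE),
    Measure.prod_apply (hm ((MeasurableSet.singleton k).prod hE)), Measure.prod_prod,
    Measure.map_apply hcl (.singleton k), lintegral_congr hfib, lintegral_indicator hk,
    ← lintegral_map (f := fun v => iid π (prepend v ⁻¹' E)) .of_discrete hword, h k,
    lintegral_smul_measure, ← hprep]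
  rfl

/-! ### Stopping rules -/

lemma measurable_sInf_nat {X : Type*} [MeasurableSpace X] {P : ℕ → X → Prop}
    (hP : ∀ n, MeasurableSet {x | P n x}) : Measurable fun x => sInf {n | P n x} := by
  classical
  have hex (x : X) : ∃ n, P n x ∨ n = 0 ∧ ∀ m, ¬ P m x := by
    by_cases h : ∃ n, P n x
    · exact h.imp fun n => .inl
    · exact ⟨0, .inr ⟨rfl, not_exists.1 h⟩⟩
  have hfind : (fun x => sInf {n | P n x}) = fun x => Nat.find (hex x) := by
    funext x
    rcases Set.eq_empty_or_nonempty {n | P n x} with h | h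
    · rw [h, Nat.sInf_empty, eq_comm, Nat.find_eq_zero]
      exact .inr ⟨rfl, Set.eq_empty_iff_forall_notMem.1 h⟩
    · refine (Nat.find_eq_iff _).2 ⟨.inl (Nat.sInf_mem h), fun n hn => ?_⟩ |>.symm
      rintro (hP | ⟨-, hP⟩)
      · exact Nat.notMem_of_lt_sInf hn hP
      · exact hP _ h.some_mem
  rw [hfind]
  have hnone : MeasurableSet {x | ∀ m, ¬ P m x} := by
    rw [Set.ofPred_forall]
    exact .iInter fun m => (hP m).compl
  exact measurable_find _ fun n => (hP n).union ((MeasurableSet.const _).inter hnone)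

section StoppingRules

variable {α : Type*} (S : Set (List α))

/-- The time at which the stopping rule `S` applies to `x`: the length of the first initial word
of `x` in `S`, and `0` if there is none. -/
def firstLen (x : ℕ → α) : ℕ := sInf {n | takeFirst n x ∈ S}

/-- The first initial word of `x` that lies in `S`. -/
def firstWord (x : ℕ → α) : List α := takeFirst (firstLen S x) x

/-- The part of `x` that follows its first initial word in `S`. -/
def afterFirst (x : ℕ → α) : ℕ → α := dropFirst (firstLen S x) x

/-- The words of `S` without proper initial word in `S`. -/
def firstWords : Set (List α) := {u | u ∈ S ∧ ∀ n < u.length, u.take n ∉ S}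

/-- The sequences to which the stopping rule `S` does not apply up to time `m`. -/
def avoiding (m : ℕ) : Set (ℕ → α) := {x | ∀ n ≤ m, takeFirst n x ∉ S}

variable {S}

lemma firstWord_mem {x : ℕ → α} (hx : ∃ n, takeFirst n x ∈ S) : firstWord S x ∈ S :=
  Nat.sInf_mem (s := {n | takeFirst n x ∈ S}) hx

lemma length_firstWord (x : ℕ → α) : (firstWord S x).length = firstLen S x :=
  length_takeFirst _ _

lemma firstWord_mem_firstWords {x : ℕ → α} (hx : ∃ n, takeFirst n x ∈ S) :
    firstWord S x ∈ firstWords S := by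
  refine ⟨firstWord_mem hx, fun n hn => ?_⟩
  rw [length_firstWord] at hn
  rw [firstWord, take_takeFirst hn.le]
  exact Nat.notMem_of_lt_sInf hn

lemma firstLen_eq_length {x : ℕ → α} {u : List α} (hu : u ∈ firstWords S)
    (hx : takeFirst u.length x = u) : firstLen S x = u.length := by
  refine le_antisymm (Nat.sInf_le (by simpa [hx] using hu.1)) (le_csInf ⟨u.length, ?_⟩ ?_)
  · simpa [hx] using hu.1
  · intro n hn
    by_contra! hlt
    exact hu.2 n hlt (by rwa [← hx, take_takeFirst hlt.le])

lemma firstWord_eq_iff {x : ℕ → α} {u : List α} (hu : u ∈ firstWords S) :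
    firstWord S x = u ↔ takeFirst u.length x = u := by
  refine ⟨fun h => ?_, fun h => ?_⟩
  · rw [← h, length_firstWord, firstWord]
  · rw [firstWord, firstLen_eq_length hu h, h]

lemma lt_firstLen_iff {x : ℕ → α} (hx : ∃ n, takeFirst n x ∈ S) (m : ℕ) :
    m < firstLen S x ↔ x ∈ avoiding S m :=
  ⟨fun h _ hn => Nat.notMem_of_lt_sInf (hn.trans_lt h),
    fun h => not_le.1 fun hle => h _ hle (firstWord_mem hx)⟩

lemma avoiding_eq_preimage (m : ℕ) :
    avoiding S m = takeFirst m ⁻¹' {u | ∀ n ≤ m, u.take n ∉ S} := by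
  ext x
  exact forall₂_congr fun n hn => by rw [take_takeFirst hn]

variable [MeasurableSpace α] {π : Measure α}

lemma ae_stops_of_tsum_avoiding_ne_top (h : ∑' m, iid π (avoiding S m) ≠ ∞) :
    ∀ᵐ x ∂iid π, ∃ n, takeFirst n x ∈ S :=
  le_antisymm (ge_of_tendsto' (ENNReal.tendsto_atTop_zero_of_tsum_ne_top h) fun _ =>
    measure_mono fun _ hx n _ hn => hx ⟨n, hn⟩) zero_le

variable [Countable α] [DiscreteMeasurableSpace α]

lemma measurableSet_avoiding (m : ℕ) : MeasurableSet (avoiding S m) := by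
  rw [avoiding_eq_preimage]
  exact measurable_takeFirst m .of_discrete

@[fun_prop]
lemma measurable_firstLen : Measurable (firstLen S) :=
  measurable_sInf_nat fun n => measurable_takeFirst n .of_discrete

@[fun_prop]
lemma measurable_firstWord : Measurable (firstWord S) :=
  (measurable_from_prod_countable_right (f := fun z : ℕ × (ℕ → α) => takeFirst z.1 z.2)
    fun n => measurable_takeFirst n).comp (measurable_firstLen.prodMk measurable_id)

@[fun_prop]
lemma measurable_afterFirst : Measurable (afterFirst S) :=
  (measurable_from_prod_countable_right (f := fun z : ℕ × (ℕ → α) => dropFirst z.1 z.2)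
    fun n => measurable_dropFirst n).comp (measurable_firstLen.prodMk measurable_id)

variable [IsProbabilityMeasure π]

lemma map_firstWord_singleton (hS : ∀ᵐ x ∂iid π, ∃ n, takeFirst n x ∈ S) (u : List α) :
    (iid π).map (firstWord S) {u} =
      (firstWords S).indicator (fun u => (u.map fun a => π {a}).prod) u := by
  rw [Measure.map_apply measurable_firstWord (.singleton u)]
  by_cases hu : u ∈ firstWords S
  · rw [Set.indicator_of_mem hu, ← iid_takeFirst_eq]
    exact congrArg _ (Set.ext fun x => firstWord_eq_iff hu)
  · rw [Set.indicator_of_notMem hu, measure_eq_zero_iff_ae_notMem]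
    filter_upwards [hS] with x hx hxu
    exact hu (Set.mem_singleton_iff.1 hxu ▸ firstWord_mem_firstWords hx)

instance isProbabilityMeasure_map_firstWord : IsProbabilityMeasure ((iid π).map (firstWord S)) :=
  Measure.isProbabilityMeasure_map (by fun_prop)

lemma measurePreserving_firstWord_afterFirst (hS : ∀ᵐ x ∂iid π, ∃ n, takeFirst n x ∈ S) :
    MeasurePreserving (fun x => (firstWord S x, afterFirst S x)) (iid π)
      (((iid π).map (firstWord S)).prod (iid π)) := by
  have hm : Measurable fun x => (firstWord S x, afterFirst S x) := by fun_prop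
  refine ⟨hm, ext_of_singleton_prod fun u E hE => ?_⟩
  rw [Measure.map_apply hm ((MeasurableSet.singleton u).prod hE), Measure.prod_prod]
  by_cases hu : u ∈ firstWords S
  · rw [map_firstWord_singleton hS, Set.indicator_of_mem hu, ← iid_takeFirst_eq,
      ← iid_takeFirst_eq_dropFirst_mem π u hE]
    refine congrArg _ (Set.ext fun x => ?_)
    simp only [Set.mem_preimage, Set.mem_prod, Set.mem_singleton_iff, Set.mem_ofPred_eq,
      firstWord_eq_iff hu]
    exact and_congr_right fun h => by rw [afterFirst, firstLen_eq_length hu h]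
  · rw [map_firstWord_singleton hS, Set.indicator_of_notMem hu, zero_mul,
      measure_eq_zero_iff_ae_notMem]
    filter_upwards [hS] with x hx hxu
    exact hu (Set.mem_singleton_iff.1 hxu.1 ▸ firstWord_mem_firstWords hx)

lemma lintegral_indicator_avoiding_mul (m : ℕ) (g : α → ℝ≥0∞) :
    ∫⁻ x, (avoiding S m).indicator 1 x * g (x m) ∂iid π = iid π (avoiding S m) * ∫⁻ a, g a ∂π := by
  have hg : Measurable fun y : ℕ → α => g (y 0) :=
    (Measurable.of_discrete (f := g)).comp (measurable_pi_apply 0)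
  have hind := (indepFun_takeFirst_dropFirst π m).comp
    (φ := {u : List α | ∀ n ≤ m, u.take n ∉ S}.indicator (1 : List α → ℝ≥0∞))
    (ψ := fun y => g (y 0)) .of_discrete hg
  have h := ProbabilityTheory.lintegral_mul_eq_lintegral_mul_lintegral_of_indepFun
    (Measurable.of_discrete.comp (measurable_takeFirst m))
    (hg.comp (measurable_dropFirst m)) hind
  have heval : ∫⁻ x : ℕ → α, g (x m) ∂iid π = ∫⁻ a, g a ∂π :=
    (measurePreserving_eval_infinitePi (fun _ : ℕ => π) m).lintegral_comp .of_discrete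
  rw [← heval, ← lintegral_indicator_one (measurableSet_avoiding m), avoiding_eq_preimage]
  exact h

lemma lintegral_sum_firstLen (hS : ∀ᵐ x ∂iid π, ∃ n, takeFirst n x ∈ S) (g : α → ℝ≥0∞) :
    ∫⁻ x, ∑ i ∈ Finset.range (firstLen S x), g (x i) ∂iid π =
      (∑' m, iid π (avoiding S m)) * ∫⁻ a, g a ∂π := by
  have h : ∫⁻ x, ∑ i ∈ Finset.range (firstLen S x), g (x i) ∂iid π =
      ∫⁻ x, ∑' i, (avoiding S i).indicator 1 x * g (x i) ∂iid π := by
    refine lintegral_congr_ae ?_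
    filter_upwards [hS] with x hx
    rw [tsum_eq_sum (s := Finset.range (firstLen S x)) fun i hi => ?_]
    · refine Finset.sum_congr rfl fun i hi => ?_
      simp [(lt_firstLen_iff hx i).1 (Finset.mem_range.1 hi)]
    · rw [Finset.mem_range, lt_firstLen_iff hx] at hi
      simp [hi]
  rw [h, lintegral_tsum fun i => ?_, ← ENNReal.tsum_mul_right]
  · exact tsum_congr fun i => lintegral_indicator_avoiding_mul i g
  · exact ((measurable_one.indicator (measurableSet_avoiding i)).mul
      (Measurable.of_discrete.comp (measurable_pi_apply i))).aemeasurable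

lemma lintegral_firstLen (hS : ∀ᵐ x ∂iid π, ∃ n, takeFirst n x ∈ S) :
    ∫⁻ x, (firstLen S x : ℝ≥0∞) ∂iid π = ∑' m, iid π (avoiding S m) := by
  simpa using lintegral_sum_firstLen hS fun _ => 1

end StoppingRules

/-! ### Markers -/

section Markers

variable {α : Type*}

/-- A word is unbordered if no proper nonempty suffix of it is also a prefix, so that two
occurrences of it in a sequence never overlap. -/
def IsUnbordered (w : List α) : Prop := ∀ d, 0 < d → d < w.length → ¬ w.drop d <+: w

lemma isUnbordered_replicate_append_singleton {a b : α} (hab : a ≠ b) (k : ℕ) :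
    IsUnbordered (List.replicate k a ++ [b]) := by
  intro d hd hdk hpre
  have hdk : d ≤ k := by simpa [Nat.lt_succ_iff] using hdk
  have h := hpre.getElem (i := k - d) (by simp; omega)
  rw [List.getElem_drop, List.getElem_append_right (by simp; omega),
    List.getElem_append_left (by simp; omega)] at h
  simp at h
  exact hab h.symm

lemma exists_isUnbordered_length_ge [Nontrivial α] (n : ℕ) :
    ∃ w : List α, IsUnbordered w ∧ n ≤ w.length := by
  obtain ⟨a, b, hab⟩ := exists_pair_ne α
  exact ⟨_, isUnbordered_replicate_append_singleton hab n, by simp⟩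

/-- The stopping rule that waits for the marker word `w`. -/
def endsIn (w : List α) : Set (List α) := {u | w <:+ u}

/-- The sequences that start with the word `w`. -/
def startingWith (w : List α) : Set (ℕ → α) := {x | takeFirst w.length x = w}

lemma takeFirst_mem_endsIn_iff {w : List α} {n : ℕ} {x : ℕ → α} :
    takeFirst n x ∈ endsIn w ↔ ∃ m, n = m + w.length ∧ dropFirst m x ∈ startingWith w := by
  constructor
  · intro h
    have hle : w.length ≤ n := by simpa using h.length_le
    refine ⟨n - w.length, by omega, ?_⟩
    have h' := List.suffix_iff_eq_drop.1 h
    rw [length_takeFirst] at h'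
    change takeFirst w.length (dropFirst (n - w.length) x) = w
    conv_rhs => rw [h', ← Nat.sub_add_cancel hle, takeFirst_add]
    simp
  · rintro ⟨m, rfl, h⟩
    rw [takeFirst_add, show takeFirst w.length (dropFirst m x) = w from h]
    exact List.suffix_append _ _

lemma IsUnbordered.add_length_le {w : List α} (hw : IsUnbordered w) {m n : ℕ} {x : ℕ → α}
    (hm : dropFirst m x ∈ startingWith w) (hn : dropFirst n x ∈ startingWith w) (hmn : m < n) :
    m + w.length ≤ n := by
  by_contra! hlt
  obtain ⟨d, rfl⟩ := Nat.exists_eq_add_of_lt hmn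
  refine hw (d + 1) d.succ_pos (by omega) ?_
  obtain ⟨r, hr⟩ : ∃ r, w.length = d + 1 + r := ⟨_, (Nat.add_sub_of_le (by omega)).symm⟩
  have hsuffix : w.drop (d + 1) = takeFirst r (dropFirst (m + d + 1) x) := by
    conv_lhs => rw [← show takeFirst w.length (dropFirst m x) = w from hm, hr, takeFirst_add]
    simp [dropFirst_dropFirst, add_assoc]
  rw [hsuffix, ← take_takeFirst (by omega : r ≤ w.length)]
  nth_rw 2 [← show takeFirst w.length (dropFirst (m + d + 1) x) = w from hn]
  exact List.take_prefix _ _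

lemma IsUnbordered.disjoint_avoiding_inter {w : List α} (hw : IsUnbordered w) {m n : ℕ}
    (hmn : m < n) :
    Disjoint (avoiding (endsIn w) m ∩ dropFirst m ⁻¹' startingWith w)
      (avoiding (endsIn w) n ∩ dropFirst n ⁻¹' startingWith w) := by
  rw [Set.disjoint_left]
  rintro x ⟨-, hm⟩ ⟨havoid, hn⟩
  exact havoid _ (hw.add_length_le hm hn hmn) (takeFirst_mem_endsIn_iff.2 ⟨m, rfl, hm⟩)

variable [MeasurableSpace α] {π : Measure α} [IsProbabilityMeasure π]

lemma length_le_tsum_avoiding_endsIn (w : List α) :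
    (w.length : ℝ≥0∞) ≤ ∑' m, iid π (avoiding (endsIn w) m) := by
  refine le_trans ?_ (ENNReal.sum_le_tsum (Finset.range w.length))
  have huniv {m : ℕ} (hm : m < w.length) : avoiding (endsIn w) m = (Set.univ : Set (ℕ → α)) := by
    refine Set.eq_univ_of_forall fun x n hn hmem => ?_
    obtain ⟨_, rfl, -⟩ := takeFirst_mem_endsIn_iff.1 hmem
    omega
  rw [Finset.sum_congr rfl fun m hm => by rw [huniv (Finset.mem_range.1 hm), measure_univ]]
  simp

variable [Countable α] [DiscreteMeasurableSpace α]

lemma measurableSet_startingWith (w : List α) : MeasurableSet (startingWith w) :=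
  measurable_takeFirst _ (.singleton w)

lemma IsUnbordered.tsum_avoiding_endsIn_ne_top (hπ : ∀ a, π {a} ≠ 0) {w : List α}
    (hw : IsUnbordered w) : ∑' m, iid π (avoiding (endsIn w) m) ≠ ∞ := by
  have hinter (m : ℕ) : iid π (avoiding (endsIn w) m ∩ dropFirst m ⁻¹' startingWith w) =
      iid π (avoiding (endsIn w) m) * iid π (startingWith w) := by
    have h := (indepFun_takeFirst_dropFirst π m).measure_inter_preimage_eq_mul _ _
      (.of_discrete (s := {u | ∀ n ≤ m, u.take n ∉ endsIn w})) (measurableSet_startingWith w)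
    rwa [← avoiding_eq_preimage, (measurePreserving_dropFirst π m).measure_preimage
      (measurableSet_startingWith w).nullMeasurableSet] at h
  have hle : (∑' m, iid π (avoiding (endsIn w) m)) * iid π (startingWith w) ≤ 1 := by
    rw [← ENNReal.tsum_mul_right]
    simp only [← hinter]
    rw [← measure_iUnion (fun m n hmn => ?_) fun m => (measurableSet_avoiding m).inter
      (measurable_dropFirst m (measurableSet_startingWith w))]
    · exact prob_le_one
    · rcases hmn.lt_or_gt with h | h
      exacts [hw.disjoint_avoiding_inter h, (hw.disjoint_avoiding_inter h).symm]
  intro htop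
  have hpos : iid π (startingWith w) ≠ 0 := by
    rw [startingWith, iid_takeFirst_eq]
    simp [List.prod_eq_zero_iff, hπ]
  simp [htop, ENNReal.top_mul hpos] at hle

end Markers

/-! ### Backward iteration of random maps -/

section Eventually

variable {β : Type*} [Nonempty β]

/-- The value at which the sequence `f` stabilises, that is, its limit in the discrete topology. -/
def eventualValue (f : ℕ → β) : β :=
  letI : TopologicalSpace β := ⊥
  limUnder atTop f

lemma eventualValue_eq {f : ℕ → β} {b : β} (h : ∀ᶠ n in atTop, f n = b) : eventualValue f = b := by
  let : TopologicalSpace β := ⊥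
  have : DiscreteTopology β := ⟨rfl⟩
  exact (tendsto_pure.2 h |>.mono_right (pure_le_nhds b)).limUnder_eq

lemma eventualValue_comp_succ (f : ℕ → β) :
    eventualValue (fun n => f (n + 1)) = eventualValue f := by
  simp only [eventualValue, limUnder]
  rw [← Function.comp_def f (· + 1), ← map_map, map_add_atTop_eq_nat 1]

lemma measurable_eventualValue {X : Type*} [MeasurableSpace X] [Countable β] [MeasurableSpace β]
    [DiscreteMeasurableSpace β] {f : ℕ → X → β} (hf : ∀ n, Measurable (f n)) :
    Measurable fun x => eventualValue fun n => f n x := by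
  let : TopologicalSpace β := ⊥
  have : DiscreteTopology β := ⟨rfl⟩
  exact (StronglyMeasurable.limUnder fun n => (hf n).stronglyMeasurable).measurable

end Eventually

section Back

variable {X U Z : Type*} (bl : X → U) (nx : X → X)

/-- The composition `T (bl x) ∘ T (bl (nx x)) ∘ ⋯` of the maps belonging to the first `R` blocks
`bl (nx^[i] x)` of `x`, so that the first block acts last. -/
def back (T : U → Z → Z) : ℕ → X → Z → Z
  | 0, _, z => z
  | R + 1, x, z => T (bl x) (back T R (nx x) z)

variable {bl nx}

lemma back_add (T : U → Z → Z) (R m : ℕ) (x : X) (z : Z) :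
    back bl nx T (R + m) x z = back bl nx T R x (back bl nx T m (nx^[R] x) z) := by
  induction R generalizing x with
  | zero => simp [back]
  | succ R ih =>
    rw [Nat.add_right_comm]
    simp only [back, ih, Function.iterate_succ, Function.comp]

lemma measurePreserving_back [MeasurableSpace X] [MeasurableSpace U] [MeasurableSpace Z]
    {μ : Measure X} {P : Measure U} {m : Measure Z} [IsProbabilityMeasure μ]
    [IsProbabilityMeasure P] [IsProbabilityMeasure m] {T : U → Z → Z}
    (hpar : MeasurePreserving (fun x => (bl x, nx x)) μ (P.prod μ))
    (hT : MeasurePreserving (fun z : U × Z => T z.1 z.2) (P.prod m) m) (R : ℕ) :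
    MeasurePreserving (fun z : X × Z => back bl nx T R z.1 z.2) (μ.prod m) m := by
  induction R with
  | zero => exact measurePreserving_snd
  | succ R ih =>
    exact hT.comp (((MeasurePreserving.id P).prod ih).comp
      ((measurePreserving_prodAssoc P μ m).comp (hpar.prod (MeasurePreserving.id m))))

end Back

lemma ae_eventually_sum_nonneg {κ : Type*} [MeasurableSpace κ] {ρ : Measure κ}
    [IsProbabilityMeasure ρ] {e : κ → ℝ} (hem : Measurable e) (he : Integrable e ρ)
    (hpos : 0 < ∫ k, e k ∂ρ) :
    ∀ᵐ d ∂iid ρ, ∀ j, ∀ᶠ R in atTop, 0 ≤ ∑ l ∈ Finset.Ico j R, e (d l) := by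
  have hev (i : ℕ) : MeasurePreserving (Function.eval i) (iid ρ) ρ :=
    measurePreserving_eval_infinitePi (fun _ : ℕ => ρ) i
  have hind : ProbabilityTheory.iIndepFun (fun (i : ℕ) (d : ℕ → κ) => e (d i)) (iid ρ) :=
    ProbabilityTheory.iIndepFun_infinitePi (X := fun _ => e) fun _ => hem
  have hident (i : ℕ) : ProbabilityTheory.IdentDistrib (fun d : ℕ → κ => e (d i)) e (iid ρ) ρ :=
    ⟨(hem.comp (hev i).measurable).aemeasurable, hem.aemeasurable, by
      rw [← Function.comp_def e, ← Measure.map_map hem (hev i).measurable]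
      exact congrArg _ (hev i).map_eq⟩
  have hlaw := ProbabilityTheory.strong_law_ae_real (fun (i : ℕ) (d : ℕ → κ) => e (d i))
    ((hident 0).integrable_iff.2 he) (fun i j hij => hind.indepFun hij)
    fun i => (hident i).trans (hident 0).symm
  rw [(hident 0).integral_eq] at hlaw
  filter_upwards [hlaw] with d hd j
  have hmean : ∀ᶠ R : ℕ in atTop, (∫ k, e k ∂ρ) / 2 < (∑ i ∈ Finset.range R, e (d i)) / R :=
    hd.eventually_const_lt (half_lt_self hpos)
  have hinit : ∀ᶠ R : ℕ in atTop, ∑ i ∈ Finset.range j, e (d i) ≤ (∫ k, e k ∂ρ) / 2 * R :=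
    (tendsto_natCast_atTop_atTop.const_mul_atTop (half_pos hpos)).eventually_ge_atTop _
  filter_upwards [hmean, hinit, eventually_gt_atTop j] with R h₁ h₂ hR
  rw [lt_div_iff₀ (by exact_mod_cast j.zero_le.trans_lt hR)] at h₁
  linarith [Finset.sum_range_add_sum_Ico (fun i => e (d i)) hR.le]

/-! ### Stack machines -/

/-- The sequences `s` and `s'` agree at all indices below the integer `c`. -/
def AgreeBelow {δ : Type*} (c : ℤ) (s s' : ℕ → δ) : Prop := ∀ i : ℕ, (i : ℤ) < c → s i = s' i

/-- A machine that reads a block in `U` and modifies its stack, a sequence over `D`. It emits a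
symbol of `κ`, which stands for an output word over `B`. A step with emission `k` in `good` raises
the stack by `gain k`: two stacks which agree below `c` are led to stacks which agree below
`c + gain k`, and to the same output if `c + gain k` is nonnegative. -/
structure StackMachine (U D κ B : Type*) where
  /-- The emitted symbol. -/
  emit : U → (ℕ → D) → κ
  /-- The new stack. -/
  next : U → (ℕ → D) → ℕ → D
  /-- The output word that a symbol stands for. -/
  word : κ → List B
  /-- The change in stack height. -/
  gain : κ → ℤ
  /-- The symbols of the regular steps. -/
  good : Set κ
  agreeBelow_next : ∀ {u s s' c}, AgreeBelow c s s' → emit u s ∈ good →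
    AgreeBelow (c + gain (emit u s)) (next u s) (next u s')
  word_congr : ∀ {u s s' c}, AgreeBelow c s s' → emit u s ∈ good → 0 ≤ c + gain (emit u s) →
    word (emit u s') = word (emit u s)
  word_ne_nil : ∀ k ∈ good, word k ≠ []

namespace StackMachine

variable {X U D κ B W : Type*} (M : StackMachine U D κ B) {bl : X → U} {nx : X → X}

/-- One step of the machine on a stack paired with a register, on which emissions act by `act`. -/
def step (act : κ → W → W) (u : U) (z : (ℕ → D) × W) : (ℕ → D) × W :=
  (M.next u z.1, act (M.emit u z.1) z.2)

variable (bl nx)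

/-- The emissions of the machine over the first `R` blocks of `x`, followed by `d`. -/
def emissions (R : ℕ) (x : X) (s : ℕ → D) (d : ℕ → κ) : ℕ → κ :=
  (back bl nx (M.step fun k => prepend [k]) R x (s, d)).2

/-- The output of the machine over the first `R` blocks of `x`, followed by `y`. -/
def output (R : ℕ) (x : X) (s : ℕ → D) (y : ℕ → B) : ℕ → B :=
  (back bl nx (M.step fun k => prepend (M.word k)) R x (s, y)).2

variable {bl nx}

lemma back_step_fst (act : κ → W → W) (R : ℕ) (x : X) (s : ℕ → D) (w : W) :
    (back bl nx (M.step act) R x (s, w)).1 = back bl nx M.next R x s := by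
  induction R generalizing x with
  | zero => rfl
  | succ R ih => simp only [back, step, ih]

lemma emissions_succ_zero (R : ℕ) (x : X) (s : ℕ → D) (d : ℕ → κ) :
    M.emissions bl nx (R + 1) x s d 0 = M.emit (bl x) (back bl nx M.next R (nx x) s) := by
  simp [emissions, back, step, back_step_fst]

lemma emissions_succ_succ (R : ℕ) (x : X) (s : ℕ → D) (d : ℕ → κ) (i : ℕ) :
    M.emissions bl nx (R + 1) x s d (i + 1) = M.emissions bl nx R (nx x) s d i := by
  simp [emissions, back, step]

lemma output_succ (R : ℕ) (x : X) (s : ℕ → D) (y : ℕ → B) :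
    M.output bl nx (R + 1) x s y = prepend (M.word (M.emit (bl x) (back bl nx M.next R (nx x) s)))
      (M.output bl nx R (nx x) s y) := by
  simp only [output, back, step, back_step_fst]

lemma output_add (R m : ℕ) (x : X) (s : ℕ → D) (y : ℕ → B) :
    M.output bl nx (R + m) x s y = M.output bl nx R x (back bl nx M.next m (nx^[R] x) s)
      (M.output bl nx m (nx^[R] x) s y) := by
  rw [output, back_add, output, output, ← M.back_step_fst (fun k => prepend (M.word k)) m _ s y]

/-- The emission sequences along which the first `I` outputs are settled after `R` blocks. -/
def settled (I R : ℕ) : Set (ℕ → κ) :=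
  {d | (∀ l < R, d l ∈ M.good) ∧ ∀ j < I, 0 ≤ ∑ l ∈ Finset.Ico j R, M.gain (d l)}

lemma agreeBelow_back {s : ℕ → D} (s' : ℕ → D) {d : ℕ → κ} {R : ℕ} {x : X}
    (hg : ∀ l < R, M.emissions bl nx R x s d l ∈ M.good) :
    AgreeBelow (∑ l ∈ Finset.range R, M.gain (M.emissions bl nx R x s d l))
      (back bl nx M.next R x s) (back bl nx M.next R x s') := by
  induction R generalizing x with
  | zero => exact fun i hi => absurd hi (by simp)
  | succ R ih =>
    have h₀ := hg 0 R.succ_pos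
    simp only [Finset.sum_range_succ', emissions_succ_zero, emissions_succ_succ] at h₀ ⊢
    refine M.agreeBelow_next (ih fun l hl => ?_) h₀
    simpa only [emissions_succ_succ] using hg (l + 1) (Nat.succ_lt_succ hl)

lemma output_eq_of_emissions_mem_settled {s : ℕ → D} (s' : ℕ → D) {d : ℕ → κ} (y y' : ℕ → B)
    {i I R : ℕ} {x : X} (hi : i < I) (hIR : I ≤ R)
    (h : M.emissions bl nx R x s d ∈ M.settled I R) :
    M.output bl nx R x s' y' i = M.output bl nx R x s y i := by
  induction R generalizing x i I with
  | zero => omega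
  | succ R ih =>
    obtain ⟨hg, hsum⟩ := h
    have hg' (l : ℕ) (hl : l < R) : M.emissions bl nx R (nx x) s d l ∈ M.good := by
      simpa only [emissions_succ_succ] using hg (l + 1) (Nat.succ_lt_succ hl)
    have hg₀ := hg 0 R.succ_pos
    have hsum₀ := hsum 0 (Nat.zero_lt_of_lt hi)
    simp only [← Finset.range_eq_Ico, Finset.sum_range_succ', emissions_succ_zero,
      emissions_succ_succ] at hg₀ hsum₀
    rw [output_succ, output_succ, M.word_congr (M.agreeBelow_back s' hg') hg₀ hsum₀]
    set v := M.word (M.emit (bl x) (back bl nx M.next R (nx x) s))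
    have hv : 0 < v.length := List.length_pos_of_ne_nil (M.word_ne_nil _ hg₀)
    rcases lt_or_ge i v.length with hiv | hiv
    · rw [prepend_of_lt_length hiv, prepend_of_lt_length hiv]
    · rw [prepend_of_length_le hiv, prepend_of_length_le hiv]
      refine ih (I := I - 1) (by omega) (by omega) ⟨hg', fun j hj => ?_⟩
      have := hsum (j + 1) (by omega)
      rw [← Finset.sum_Ico_add' _ j R 1] at this
      simpa only [emissions_succ_succ] using this

section Code

variable (bl nx) [Nonempty D] [Nonempty B]

/-- The output of the machine over all blocks of `x`: each entry is the value at which the outputs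
over finitely many blocks stabilise. -/
def code (x : X) (i : ℕ) : B :=
  eventualValue fun R => M.output bl nx R x (fun _ => Classical.arbitrary D)
    (fun _ => Classical.arbitrary B) i

variable {bl nx}

lemma code_eq_of_emissions_mem_settled {s : ℕ → D} {d : ℕ → κ} (y : ℕ → B) {i I R : ℕ} {x : X}
    (hi : i < I) (hIR : I ≤ R) (h : M.emissions bl nx R x s d ∈ M.settled I R) :
    M.code bl nx x i = M.output bl nx R x s y i := by
  refine eventualValue_eq ?_
  filter_upwards [eventually_ge_atTop R] with R' hR'
  obtain ⟨m, rfl⟩ := Nat.exists_eq_add_of_le hR'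
  rw [output_add]
  exact M.output_eq_of_emissions_mem_settled _ _ _ hi hIR h

lemma dropFirst_code {len : U → ℕ} (hlen : ∀ u s, (M.word (M.emit u s)).length = len u) (x : X) :
    dropFirst (len (bl x)) (M.code bl nx x) = M.code bl nx (nx x) := by
  funext i
  rw [dropFirst, code, ← eventualValue_comp_succ]
  simp only [output_succ]
  refine congrArg eventualValue (funext fun R => ?_)
  rw [prepend_of_length_le (by rw [hlen]; exact Nat.le_add_right _ _), hlen,
    Nat.add_sub_cancel_left]

end Code

section Settled

variable [MeasurableSpace κ] [DiscreteMeasurableSpace κ]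

lemma measurableSet_settled (I R : ℕ) : MeasurableSet (M.settled I R) := by
  simp only [settled, Set.ofPred_and, Set.ofPred_forall]
  refine .inter (.iInter fun l => .iInter fun _ => measurable_pi_apply l .of_discrete)
    (.iInter fun j => .iInter fun _ => measurableSet_le measurable_const ?_)
  exact Finset.measurable_sum _ fun l _ => (Measurable.of_discrete (f := M.gain)).comp
    (measurable_pi_apply l)

variable {ρ : Measure κ} [IsProbabilityMeasure ρ]
  (hgood : ∀ᵐ k ∂ρ, k ∈ M.good) (he : Integrable (fun k => (M.gain k : ℝ)) ρ)
  (hpos : 0 < ∫ k, (M.gain k : ℝ) ∂ρ)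

include hgood he hpos in
lemma tendsto_measure_compl_settled (I : ℕ) :
    Tendsto (fun R => iid ρ (M.settled I R)ᶜ) atTop (nhds 0) := by
  have hev : ∀ᵐ d ∂iid ρ, ∀ᶠ R in atTop, d ∈ M.settled I R := by
    have hall : ∀ᵐ d ∂iid ρ, ∀ l : ℕ, d l ∈ M.good := ae_all_iff.2 fun l =>
      (measurePreserving_eval_infinitePi (fun _ : ℕ => ρ) l).quasiMeasurePreserving.ae hgood
    filter_upwards [hall, ae_eventually_sum_nonneg .of_discrete he hpos] with d hd hsum
    filter_upwards [(Finset.eventually_all (Finset.range I)).2 fun j _ => hsum j] with R hR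
    exact ⟨fun l _ => hd l, fun j hj => by exact_mod_cast hR j (Finset.mem_range.2 hj)⟩
  have := tendsto_measure_of_ae_tendsto_indicator_of_isFiniteMeasure (μ := iid ρ) atTop
    (A := ∅) .empty (fun R => (M.measurableSet_settled I R).compl) <| by
      filter_upwards [hev] with d hd
      filter_upwards [hd] with R hR
      simp [hR]
  simpa using this

end Settled

section Law

variable [MeasurableSpace X] [MeasurableSpace U] [MeasurableSpace D] [MeasurableSpace κ]
  [MeasurableSpace W] {μ : Measure X} {P : Measure U} {δ : Measure D}
  {ρ : Measure κ} {m : Measure W} [IsProbabilityMeasure μ] [IsProbabilityMeasure P]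
  [IsProbabilityMeasure δ] [IsProbabilityMeasure ρ] [IsProbabilityMeasure m]
  (hpar : MeasurePreserving (fun x => (bl x, nx x)) μ (P.prod μ))
  (hstep : MeasurePreserving (fun z : U × (ℕ → D) => (M.emit z.1 z.2, M.next z.1 z.2))
    (P.prod (iid δ)) (ρ.prod (iid δ)))

include hstep in
lemma measurePreserving_step {act : κ → W → W}
    (hact : MeasurePreserving (fun z : κ × W => act z.1 z.2) (ρ.prod m) m) :
    MeasurePreserving (fun z : U × ((ℕ → D) × W) => M.step act z.1 z.2)
      (P.prod ((iid δ).prod m)) ((iid δ).prod m) := by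
  have hassoc := (measurePreserving_prodAssoc P (iid δ) m).symm
  have hswap := (Measure.measurePreserving_swap (μ := ρ) (ν := iid δ)).prod (.id m)
  exact ((MeasurePreserving.id _).prod hact).comp ((measurePreserving_prodAssoc (iid δ) ρ m).comp
    (hswap.comp ((hstep.prod (.id m)).comp hassoc)))

include hpar hstep in
lemma measurePreserving_emissions [Countable κ] [DiscreteMeasurableSpace κ] (R : ℕ) :
    MeasurePreserving (fun z : X × ((ℕ → D) × (ℕ → κ)) => M.emissions bl nx R z.1 z.2.1 z.2.2)
      (μ.prod ((iid δ).prod (iid ρ))) (iid ρ) :=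
  measurePreserving_snd.comp (measurePreserving_back hpar
    (M.measurePreserving_step hstep (measurePreserving_prepend_singleton ρ)) R)

variable [MeasurableSpace B] {π : Measure B} [IsProbabilityMeasure π]
  (hword : MeasurePreserving (fun z : κ × (ℕ → B) => prepend (M.word z.1) z.2) (ρ.prod (iid π))
    (iid π))

include hpar hstep hword in
lemma measurePreserving_output (R : ℕ) :
    MeasurePreserving (fun z : X × ((ℕ → D) × (ℕ → B)) => M.output bl nx R z.1 z.2.1 z.2.2)
      (μ.prod ((iid δ).prod (iid π))) (iid π) :=
  measurePreserving_snd.comp (measurePreserving_back hpar (M.measurePreserving_step hstep hword) R)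

variable [Nonempty D] [Nonempty B] [Countable B] [DiscreteMeasurableSpace B]

include hpar hstep hword in
lemma measurable_code : Measurable (M.code bl nx) :=
  measurable_pi_iff.2 fun i => measurable_eventualValue fun R => by
    have h : Measurable fun x : X => (x, ((fun _ => Classical.arbitrary D : ℕ → D),
      (fun _ => Classical.arbitrary B : ℕ → B))) := measurable_id.prodMk measurable_const
    exact (measurable_pi_apply i).comp
      ((M.measurePreserving_output hpar hstep hword R).measurable.comp h)

variable [Countable κ] [DiscreteMeasurableSpace κ]

include hpar hstep hword in
lemma iid_le_measure_code_preimage_add {F : Finset ℕ} (t : ℕ → B) {I R : ℕ}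
    (hF : ∀ i ∈ F, i < I) (hIR : I ≤ R) :
    iid π {y | ∀ i ∈ F, y i = t i} ≤
      μ (M.code bl nx ⁻¹' {y | ∀ i ∈ F, y i = t i}) + iid ρ (M.settled I R)ᶜ := by
  let Q := μ.prod ((iid δ).prod ((iid π).prod (iid ρ)))
  have hout : MeasurePreserving (fun z : X × ((ℕ → D) × ((ℕ → B) × (ℕ → κ))) =>
      M.output bl nx R z.1 z.2.1 z.2.2.1) Q (iid π) :=
    (M.measurePreserving_output hpar hstep hword R).comp
      ((MeasurePreserving.id μ).prod ((MeasurePreserving.id _).prod measurePreserving_fst))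
  have hem : MeasurePreserving (fun z : X × ((ℕ → D) × ((ℕ → B) × (ℕ → κ))) =>
      M.emissions bl nx R z.1 z.2.1 z.2.2.2) Q (iid ρ) :=
    (M.measurePreserving_emissions hpar hstep R).comp
      ((MeasurePreserving.id μ).prod ((MeasurePreserving.id _).prod measurePreserving_snd))
  have hfst : MeasurePreserving Prod.fst Q μ := measurePreserving_fst
  have hcyl := measurableSet_cylinder F t
  rw [← hout.measure_preimage hcyl.nullMeasurableSet, ← hfst.measure_preimage
      (M.measurable_code hpar hstep hword hcyl).nullMeasurableSet,
    ← hem.measure_preimage (M.measurableSet_settled I R).compl.nullMeasurableSet]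
  refine (measure_mono fun z hz => ?_).trans (measure_union_le _ _)
  refine or_iff_not_imp_right.2 fun h i hi => ?_
  rw [← hz i hi]
  exact M.code_eq_of_emissions_mem_settled _ (hF i hi) hIR (not_not.1 h)

include hpar hstep hword in
lemma measurePreserving_code (hgood : ∀ᵐ k ∂ρ, k ∈ M.good)
    (he : Integrable (fun k => (M.gain k : ℝ)) ρ) (hpos : 0 < ∫ k, (M.gain k : ℝ) ∂ρ) :
    MeasurePreserving (M.code bl nx) μ (iid π) := by
  have hm := M.measurable_code hpar hstep hword
  have : IsProbabilityMeasure (μ.map (M.code bl nx)) :=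
    Measure.isProbabilityMeasure_map hm.aemeasurable
  refine ⟨hm, (ext_of_cylinder_le fun F t => ?_).symm⟩
  rw [Measure.map_apply hm (measurableSet_cylinder F t)]
  obtain ⟨I, hI⟩ := F.exists_nat_subset_range
  refine ge_of_tendsto
    (by simpa using (M.tendsto_measure_compl_settled hgood he hpos I).const_add _)
    ((eventually_ge_atTop I).mono fun R hR => ?_)
  exact M.iid_le_measure_code_preimage_add hpar hstep hword t
    (fun i hi => Finset.mem_range.1 (hI hi)) hR

end Law

end StackMachine

/-! ### Machines that pop words off the stack -/

namespace AgreeBelow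

variable {D : Type*} {s s' : ℕ → D} {c : ℤ}

lemma of_nonpos (hc : c ≤ 0) : AgreeBelow c s s' := fun _ hi => absurd (hi.trans_le hc) (by simp)

lemma prepend (h : AgreeBelow c s s') (u : List D) :
    AgreeBelow (c + u.length) (prepend u s) (prepend u s') := fun i hi => by
  rcases lt_or_ge i u.length with hu | hu
  · rw [prepend_of_lt_length hu, prepend_of_lt_length hu]
  · rw [prepend_of_length_le hu, prepend_of_length_le hu]
    exact h _ (by omega)

lemma takeFirst_eq (h : AgreeBelow c s s') {n : ℕ} (hn : n ≤ c) : takeFirst n s = takeFirst n s' :=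
  takeFirst_inj.2 fun i hi => h i (by omega)

lemma dropFirst (h : AgreeBelow c s s') (n : ℕ) :
    AgreeBelow (c - n) (dropFirst n s) (dropFirst n s') := fun i hi => h (n + i) (by omega)

lemma firstWord_eq {S : Set (List D)} (h : AgreeBelow c s s') (hS : firstWord S s ∈ S)
    (hc : (firstWord S s).length ≤ c) : firstWord S s' = firstWord S s := by
  have hs := firstWord_mem_firstWords ⟨_, hS⟩
  exact (firstWord_eq_iff hs).2 ((h.takeFirst_eq hc).symm.trans ((firstWord_eq_iff hs).1 rfl))

lemma afterFirst {S : Set (List D)} (h : AgreeBelow c s s') (hS : firstWord S s ∈ S) :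
    AgreeBelow (c - (firstWord S s).length) (afterFirst S s) (afterFirst S s') := by
  rcases le_or_gt ((firstWord S s).length : ℤ) c with hc | hc
  · rw [BernoulliFactor.afterFirst, BernoulliFactor.afterFirst, ← length_firstWord s',
      h.firstWord_eq hS hc, ← length_firstWord s]
    exact h.dropFirst _
  · exact of_nonpos (by omega)

end AgreeBelow

section PopMachine

variable {X U C D B : Type*} {cl : U → C} {N : C → ℕ} {label : U → List D}
  {S : C → Set (List D)} {G : C → List D → List B} {len : C → ℕ}

/-- The machine that pushes the label of a block `u` onto the stack, then pops the first word in
`S (cl u)` off the stack and translates it by `G (cl u)` into its output. -/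
def popMachine (S : C → Set (List D)) (hlabel : ∀ u, (label u).length = N (cl u))
    (hG : ∀ c v, (G c v).length = len c) (hlen : ∀ c, 0 < len c) :
    StackMachine U D (C × List D) B where
  emit u s := (cl u, firstWord (S (cl u)) (prepend (label u) s))
  next u s := afterFirst (S (cl u)) (prepend (label u) s)
  word k := G k.1 k.2
  gain k := N k.1 - k.2.length
  good := {k | k.2 ∈ S k.1}
  agreeBelow_next {u s s' c} h hS := by
    rw [← hlabel, ← add_sub_assoc]
    exact (h.prepend (label u)).afterFirst hS
  word_congr {u s s' c} h hS hc := by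
    rw [← hlabel] at hc
    rw [(h.prepend (label u)).firstWord_eq hS (by linarith)]
  word_ne_nil k _ := List.ne_nil_of_length_pos (by simp [hG, hlen])

variable [MeasurableSpace X] [MeasurableSpace U] [Countable C] [MeasurableSpace C]
  [DiscreteMeasurableSpace C] [Countable D] [MeasurableSpace D] [DiscreteMeasurableSpace D]
  {μ : Measure X} {P : Measure U} {δ : Measure D} [IsProbabilityMeasure δ]

lemma measurable_firstWord_uncurry :
    Measurable fun z : C × (ℕ → D) => (z.1, firstWord (S z.1) z.2) :=
  measurable_from_prod_countable_right fun c =>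
    measurable_const.prodMk (measurable_firstWord (S := S c))

lemma measurePreserving_pop (ν : Measure C) [IsFiniteMeasure ν]
    (hS : ∀ c, ∀ᵐ t ∂iid δ, ∃ n, takeFirst n t ∈ S c) :
    MeasurePreserving
      (fun z : C × (ℕ → D) => ((z.1, firstWord (S z.1) z.2), afterFirst (S z.1) z.2))
      (ν.prod (iid δ)) (((ν.prod (iid δ)).map fun z => (z.1, firstWord (S z.1) z.2)).prod
        (iid δ)) := by
  have hm : Measurable fun z : C × (ℕ → D) =>
      ((z.1, firstWord (S z.1) z.2), afterFirst (S z.1) z.2) :=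
    measurable_firstWord_uncurry.prodMk
      (measurable_from_prod_countable_right fun c => measurable_afterFirst (S := S c))
  refine ⟨hm, ext_of_singleton_prod fun ⟨c, v⟩ E hE => ?_⟩
  have hpair : (fun z : C × (ℕ → D) => ((z.1, firstWord (S z.1) z.2), afterFirst (S z.1) z.2)) ⁻¹'
      ({(c, v)} ×ˢ E) =
      {c} ×ˢ ((fun t => (firstWord (S c) t, afterFirst (S c) t)) ⁻¹' ({v} ×ˢ E)) := by
    ext ⟨c', t⟩
    by_cases h : c' = c <;> simp [h]
  have hword : (fun z : C × (ℕ → D) => (z.1, firstWord (S z.1) z.2)) ⁻¹' {(c, v)} =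
      {c} ×ˢ (firstWord (S c) ⁻¹' {v}) := by
    ext ⟨c', t⟩
    by_cases h : c' = c <;> simp [h]
  rw [Measure.map_apply hm ((MeasurableSet.singleton _).prod hE), hpair, Measure.prod_prod,
    (measurePreserving_firstWord_afterFirst (hS c)).measure_preimage
      ((MeasurableSet.singleton v).prod hE).nullMeasurableSet, Measure.prod_prod, Measure.prod_prod,
    Measure.map_apply measurable_firstWord_uncurry (.singleton _), hword, Measure.prod_prod,
    Measure.map_apply measurable_firstWord (.singleton v), mul_assoc]

/-- The law of the class of a block together with the word popped. -/
def popLaw (P : Measure U) (cl : U → C) (δ : Measure D) (S : C → Set (List D)) :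
    Measure (C × List D) :=
  ((P.map cl).prod (iid δ)).map fun z => (z.1, firstWord (S z.1) z.2)

lemma lintegral_popLaw (hcl : Measurable cl) (g : C × List D → ℝ≥0∞) :
    ∫⁻ k, g k ∂popLaw P cl δ S =
      ∫⁻ u, ∫⁻ t, g (cl u, firstWord (S (cl u)) t) ∂iid δ ∂P := by
  rw [popLaw, lintegral_map .of_discrete measurable_firstWord_uncurry,
    lintegral_prod (fun z : C × (ℕ → D) => g (z.1, firstWord (S z.1) z.2))
      ((Measurable.of_discrete (f := g)).comp measurable_firstWord_uncurry).aemeasurable,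
    lintegral_map .of_discrete hcl]

lemma isIIDWord_popLaw [MeasurableSpace B] [Countable B] {π : Measure B}
    (hlaw : ∀ c, (iid δ).map (fun t => G c (firstWord (S c) t)) = (iid π).map (takeFirst (len c))) :
    IsIIDWord (popLaw P cl δ S) Prod.fst len (fun k => G k.1 k.2) π := by
  have hprod (c : C) (E : Set (List D)) :
      popLaw P cl δ S ({c} ×ˢ E) = P.map cl {c} * iid δ (firstWord (S c) ⁻¹' E) := by
    rw [popLaw, Measure.map_apply measurable_firstWord_uncurry .of_discrete, ← Measure.prod_prod]
    congr 1
    ext ⟨c', t⟩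
    by_cases h : c' = c <;> simp [h]
  intro c
  refine Measure.ext_of_singleton fun w => ?_
  have hfst : (Prod.fst ⁻¹' {c} : Set (C × List D)) = {c} ×ˢ Set.univ := Set.prod_univ.symm
  have hw : (fun k : C × List D => G k.1 k.2) ⁻¹' {w} ∩ {c} ×ˢ Set.univ =
      {c} ×ˢ (G c ⁻¹' {w}) := by
    ext ⟨c', v⟩
    by_cases h : c' = c <;> simp [h]
  have hG : Measurable fun t => G c (firstWord (S c) t) := .comp .of_discrete measurable_firstWord
  rw [Measure.map_apply .of_discrete .of_discrete, Measure.restrict_apply .of_discrete, hfst, hw,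
    hprod, hprod, Measure.smul_apply, ← hlaw, Measure.map_apply hG .of_discrete]
  simp [Set.preimage_preimage]

lemma isProbabilityMeasure_popLaw [IsProbabilityMeasure P] (hcl : Measurable cl) :
    IsProbabilityMeasure (popLaw P cl δ S) :=
  have := Measure.isProbabilityMeasure_map (μ := P) hcl.aemeasurable
  Measure.isProbabilityMeasure_map measurable_firstWord_uncurry.aemeasurable

lemma ae_popLaw_mem (hcl : Measurable cl) (hS : ∀ c, ∀ᵐ t ∂iid δ, ∃ n, takeFirst n t ∈ S c) :
    ∀ᵐ k ∂popLaw P cl δ S, k.2 ∈ S k.1 := by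
  have h := lintegral_popLaw (P := P) (δ := δ) (S := S) hcl
    (Set.indicator {k : C × List D | k.2 ∉ S k.1} 1)
  rw [lintegral_indicator_one .of_discrete] at h
  refine h.trans ((lintegral_congr fun u => ?_).trans lintegral_zero)
  rw [lintegral_eq_zero_iff' (Measurable.aemeasurable ?_)]
  · filter_upwards [hS (cl u)] with t ht
    simpa using firstWord_mem ht
  · exact (Measurable.of_discrete (f := Set.indicator {k : C × List D | k.2 ∉ S k.1} 1)).comp
      (measurable_const.prodMk measurable_firstWord)

lemma integrable_gain_popLaw (hcl : Measurable cl) (hN : ∫⁻ u, (N (cl u) : ℝ≥0∞) ∂P ≠ ∞)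
    (hmean : ∫⁻ u, ∫⁻ t, (firstLen (S (cl u)) t : ℝ≥0∞) ∂iid δ ∂P < ∫⁻ u, (N (cl u) : ℝ≥0∞) ∂P) :
    Integrable (fun k : C × List D => (N k.1 : ℝ) - k.2.length) (popLaw P cl δ S) ∧
      0 < ∫ k : C × List D, ((N k.1 : ℝ) - k.2.length) ∂popLaw P cl δ S := by
  have hin := lintegral_popLaw (P := P) (δ := δ) (S := S) hcl fun k => N k.1
  have hout := lintegral_popLaw (P := P) (δ := δ) (S := S) hcl fun k => k.2.length
  simp only [length_firstWord, lintegral_const, measure_univ, mul_one] at hin hout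
  rw [← hin] at hN
  rw [← hin, ← hout] at hmean
  have hint {g : C × List D → ℕ} (hg : ∫⁻ k, (g k : ℝ≥0∞) ∂popLaw P cl δ S ≠ ∞) :
      Integrable (fun k => (g k : ℝ)) (popLaw P cl δ S) :=
    ⟨Measurable.of_discrete.aestronglyMeasurable, by simpa [HasFiniteIntegral] using hg.lt_top⟩
  have hval (g : C × List D → ℕ) :
      ∫ k, (g k : ℝ) ∂popLaw P cl δ S = (∫⁻ k, (g k : ℝ≥0∞) ∂popLaw P cl δ S).toReal := by
    rw [integral_eq_lintegral_of_nonneg_ae (ae_of_all _ fun k => by positivity)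
      Measurable.of_discrete.aestronglyMeasurable]
    simp
  refine ⟨(hint hN).sub (hint hmean.ne_top), ?_⟩
  rw [integral_sub (hint hN) (hint hmean.ne_top), hval, hval, sub_pos]
  exact (ENNReal.toReal_lt_toReal hmean.ne_top hN).2 hmean

theorem exists_code_of_labels [Countable B] [MeasurableSpace B] [DiscreteMeasurableSpace B]
    [IsProbabilityMeasure P] [IsProbabilityMeasure μ] {π : Measure B} [IsProbabilityMeasure π]
    {bl : X → U} {nx : X → X}
    (hpar : MeasurePreserving (fun x => (bl x, nx x)) μ (P.prod μ)) (hcl : Measurable cl)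
    (hlabelm : Measurable label) (hlabel : ∀ u, (label u).length = N (cl u))
    (hiid : IsIIDWord P cl N label δ) (hS : ∀ c, ∀ᵐ t ∂iid δ, ∃ n, takeFirst n t ∈ S c)
    (hG : ∀ c v, (G c v).length = len c) (hlen : ∀ c, 0 < len c)
    (hlaw : ∀ c, (iid δ).map (fun t => G c (firstWord (S c) t)) = (iid π).map (takeFirst (len c)))
    (hN : ∫⁻ u, (N (cl u) : ℝ≥0∞) ∂P ≠ ∞)
    (hmean : ∫⁻ u, ∫⁻ t, (firstLen (S (cl u)) t : ℝ≥0∞) ∂iid δ ∂P < ∫⁻ u, (N (cl u) : ℝ≥0∞) ∂P) :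
    ∃ Y : X → ℕ → B, MeasurePreserving Y μ (iid π) ∧
      ∀ x, dropFirst (len (cl (bl x))) (Y x) = Y (nx x) := by
  have : Nonempty D := nonempty_of_isProbabilityMeasure δ
  have : Nonempty B := nonempty_of_isProbabilityMeasure π
  have : IsProbabilityMeasure (P.map cl) := Measure.isProbabilityMeasure_map hcl.aemeasurable
  have := isProbabilityMeasure_popLaw (P := P) (δ := δ) (S := S) hcl
  have := Measure.isProbabilityMeasure_map (μ := popLaw P cl δ S) measurable_fst.aemeasurable
  let M : StackMachine U D (C × List D) B := popMachine S hlabel hG hlen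
  have hstep : MeasurePreserving _ _ ((popLaw P cl δ S).prod _) :=
    (measurePreserving_pop (P.map cl) hS).comp (hiid.measurePreserving_prepend hcl hlabelm)
  have hword := measurePreserving_snd.comp
    ((isIIDWord_popLaw (P := P) (cl := cl) hlaw).measurePreserving_prepend measurable_fst
      .of_discrete)
  obtain ⟨hgain, hpos⟩ := integrable_gain_popLaw hcl hN hmean
  exact ⟨M.code bl nx, M.measurePreserving_code hpar hstep hword (ae_popLaw_mem hcl hS)
      (by simpa [M, popMachine] using hgain) (by simpa [M, popMachine] using hpos),
    M.dropFirst_code (len := fun u => len (cl u)) fun u s => hG _ _⟩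

end PopMachine

/-! ### Information content -/

section Info

variable {U T : Type*} [MeasurableSpace U] [MeasurableSpace T]

/-- The information content, in bits, of the atom at `u` (junk value `0` when `P {u} = 0`). -/
def info (P : Measure U) (u : U) : ℝ≥0∞ := ENNReal.ofReal (-Real.logb 2 (P.real {u}))

lemma info_add_inv_log_le {Q R : Measure T} [IsProbabilityMeasure Q] [IsProbabilityMeasure R]
    {t : T} (hQ : Q {t} ≠ 0) (hR : R {t} ≠ 0) :
    info Q t + ENNReal.ofReal (Real.log 2)⁻¹ ≤
      info R t + ENNReal.ofReal (Real.log 2)⁻¹ * (R {t} / Q {t}) := by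
  have ha : 0 < Q.real {t} := ENNReal.toReal_pos hQ (measure_ne_top _ _)
  have hb : 0 < R.real {t} := ENNReal.toReal_pos hR (measure_ne_top _ _)
  have hlog2 : 0 < Real.log 2 := Real.log_pos one_lt_two
  have hlog := Real.log_le_sub_one_of_pos (div_pos hb ha)
  rw [Real.log_div hb.ne' ha.ne'] at hlog
  have key : -Real.logb 2 (Q.real {t}) + (Real.log 2)⁻¹ ≤
      -Real.logb 2 (R.real {t}) + (Real.log 2)⁻¹ * (R.real {t} / Q.real {t}) := by
    have := mul_le_mul_of_nonneg_left hlog (inv_nonneg.2 hlog2.le)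
    simp only [Real.logb, div_eq_inv_mul (Real.log _)]
    linarith
  have hdiv : R {t} / Q {t} = ENNReal.ofReal (R.real {t} / Q.real {t}) := by
    rw [ENNReal.ofReal_div_of_pos ha, ofReal_measureReal, ofReal_measureReal]
  have hnonneg (μ : Measure T) [IsProbabilityMeasure μ] : 0 ≤ -Real.logb 2 (μ.real {t}) :=
    neg_nonneg.2 (Real.logb_nonpos one_lt_two measureReal_nonneg measureReal_le_one)
  rw [info, info, hdiv, ← ENNReal.ofReal_mul (by positivity),
    ← ENNReal.ofReal_add (hnonneg Q) (by positivity),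
    ← ENNReal.ofReal_add (hnonneg R) (by positivity)]
  exact ENNReal.ofReal_le_ofReal key

lemma lintegral_info_le_of_forall_ne_zero [Countable T] [DiscreteMeasurableSpace T]
    (Q R : Measure T) [IsProbabilityMeasure Q] [IsProbabilityMeasure R] (hR : ∀ t, R {t} ≠ 0) :
    ∫⁻ t, info Q t ∂Q ≤ ∫⁻ t, info R t ∂Q := by
  have hratio : ∫⁻ t, R {t} / Q {t} ∂Q ≤ 1 := by
    rw [← measure_univ (μ := R), ← lintegral_one, lintegral_countable', lintegral_countable']
    exact ENNReal.tsum_le_tsum fun t => by simpa [mul_comm] using ENNReal.mul_div_le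
  have hint : ∫⁻ t, (info Q t + ENNReal.ofReal (Real.log 2)⁻¹) ∂Q ≤
      ∫⁻ t, (info R t + ENNReal.ofReal (Real.log 2)⁻¹ * (R {t} / Q {t})) ∂Q := by
    refine lintegral_mono_ae (ae_iff_of_countable.2 fun t ht => info_add_inv_log_le ht (hR t))
  rw [lintegral_add_left .of_discrete, lintegral_add_left .of_discrete, lintegral_const_mul _
    .of_discrete, lintegral_const, measure_univ, mul_one] at hint
  exact (ENNReal.add_le_add_iff_right ENNReal.ofReal_ne_top).1
    (hint.trans (by gcongr; exact mul_le_of_le_one_right' hratio))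

lemma lintegral_info_ne_top [Finite U] [DiscreteMeasurableSpace U] (P : Measure U)
    [IsFiniteMeasure P] : ∫⁻ u, info P u ∂P ≠ ∞ := by
  have := Fintype.ofFinite U
  rw [lintegral_fintype]
  exact ENNReal.sum_ne_top.2 fun u _ => mul_ne_top ofReal_ne_top (measure_ne_top _ _)

lemma nontrivial_of_lintegral_info_ne_zero {P : Measure U} [IsProbabilityMeasure P]
    (h : ∫⁻ u, info P u ∂P ≠ 0) : Nontrivial U := by
  by_contra hU
  have := not_nontrivial_iff_subsingleton.1 hU
  refine h ?_
  have huniv (u : U) : ({u} : Set U) = Set.univ :=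
    Set.eq_univ_of_forall fun v => Subsingleton.elim v u
  simp [info, measureReal_def, huniv]

end Info

/-! ### Extraction of fair bits -/

section FairLabels

variable {α : Type*}

/-- Among the elements of `C` whose label has a given length, every word of that length is
equally frequent: a uniformly chosen element of `C` has a label made of fair bits. -/
def IsFairOn (C : Finset α) (label : α → List Bool) : Prop :=
  ∀ w, {u ∈ C | label u = w}.card * 2 ^ w.length = {u ∈ C | (label u).length = w.length}.card

lemma IsFairOn.congr {C : Finset α} {l l' : α → List Bool} (h : IsFairOn C l)
    (hl : ∀ u ∈ C, l u = l' u) : IsFairOn C l' := fun w => by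
  have hcongr (p : List Bool → Prop) [DecidablePred p] : {u ∈ C | p (l' u)} = {u ∈ C | p (l u)} :=
    Finset.filter_congr fun u hu => by rw [hl u hu]
  simpa only [hcongr (· = w), hcongr (·.length = w.length)] using h w

lemma IsFairOn.disjUnion {C D : Finset α} {label : α → List Bool} (hC : IsFairOn C label)
    (hD : IsFairOn D label) (hCD : Disjoint C D) : IsFairOn (C.disjUnion D hCD) label := fun w => by
  simp only [Finset.filter_disjUnion, Finset.card_disjUnion, add_mul, hC w, hD w]

lemma exists_isFairOn_of_card_eq_two_pow {K : ℕ} {C : Finset α} (hC : C.card = 2 ^ K) :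
    ∃ label : α → List Bool, (∀ u ∈ C, (label u).length = K) ∧ IsFairOn C label := by
  classical
  let f : C ≃ List.Vector Bool K := Fintype.equivOfCardEq (by simp [hC])
  let label (u : α) : List Bool := if hu : u ∈ C then (f ⟨u, hu⟩).toList else []
  have hlabel (u : α) (hu : u ∈ C) : label u = (f ⟨u, hu⟩).toList := dif_pos hu
  have hlength (u : α) (hu : u ∈ C) : (label u).length = K := by simp [hlabel u hu]
  refine ⟨label, hlength, fun w => ?_⟩
  by_cases hw : w.length = K
  · have hone : C.filter (label · = w) = {(f.symm ⟨w, hw⟩ : α)} := by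
      ext u
      rw [Finset.mem_filter, Finset.mem_singleton]
      constructor
      · rintro ⟨hu, rfl⟩
        simp [hlabel u hu]
      · rintro rfl
        exact ⟨(f.symm ⟨w, hw⟩).2, (hlabel _ (f.symm ⟨w, hw⟩).2).trans
          (congrArg List.Vector.toList (f.apply_symm_apply ⟨w, hw⟩))⟩
    rw [hone, Finset.card_singleton, one_mul, hw, Finset.filter_true_of_mem hlength, hC]
  · rw [Finset.filter_false_of_mem fun u hu => by rintro rfl; exact hw (hlength u hu),
      Finset.filter_false_of_mem fun u hu => by rw [hlength u hu]; exact fun h => hw h.symm]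
    simp

lemma exists_isFairOn_of_card_lt_two_pow {K : ℕ} {C : Finset α} (hC : C.card < 2 ^ K) :
    ∃ label : α → List Bool, (∀ u, (label u).length ≤ K) ∧ IsFairOn C label ∧
      K * C.card ≤ ∑ u ∈ C, (label u).length + 2 ^ (K + 1) := by
  classical
  induction K generalizing C with
  | zero =>
    obtain rfl : C = ∅ := by simpa using hC
    exact ⟨fun _ => [], by simp, fun w => by simp, by simp⟩
  | succ K ih =>
    rcases lt_or_ge C.card (2 ^ K) with h | h
    · obtain ⟨label, hle, hfair, hsum⟩ := ih h
      refine ⟨label, fun u => (hle u).trans K.le_succ, hfair, ?_⟩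
      rw [pow_succ, add_mul, one_mul]
      omega
    · obtain ⟨D, hDC, hD⟩ := Finset.exists_subset_card_eq h
      have hcard : (C \ D).card + 2 ^ K = C.card := hD ▸ Finset.card_sdiff_add_card_eq_card hDC
      obtain ⟨l₁, hlen₁, hfair₁⟩ := exists_isFairOn_of_card_eq_two_pow hD
      obtain ⟨l₂, hle₂, hfair₂, hsum₂⟩ := ih (C := C \ D) (by omega)
      have hl₁ (u : α) (hu : u ∈ D) : l₁ u = D.piecewise l₁ l₂ u :=
        (D.piecewise_eq_of_mem _ _ hu).symm
      have hl₂ (u : α) (hu : u ∈ C \ D) : l₂ u = D.piecewise l₁ l₂ u :=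
        (D.piecewise_eq_of_notMem _ _ (Finset.mem_sdiff.1 hu).2).symm
      refine ⟨D.piecewise l₁ l₂, fun u => ?_, ?_, ?_⟩
      · by_cases hu : u ∈ D
        · rw [← hl₁ u hu, hlen₁ u hu]
          exact K.le_succ
        · simpa [hu] using (hle₂ u).trans K.le_succ
      · simpa [Finset.disjUnion_eq_union, Finset.sdiff_union_of_subset hDC] using
          (hfair₂.congr hl₂).disjUnion (hfair₁.congr hl₁) Finset.sdiff_disjoint
      · rw [← Finset.sum_sdiff hDC, ← Finset.sum_congr rfl fun u hu => congrArg _ (hl₂ u hu),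
          ← Finset.sum_congr rfl fun u hu => congrArg _ (hl₁ u hu), Finset.sum_const_nat hlen₁, hD,
          ← hcard]
        simp only [pow_succ] at hsum₂ hC ⊢
        nlinarith

lemma exists_isFairOn (C : Finset α) :
    ∃ label : α → List Bool, (∀ u, ((label u).length : ℝ) ≤ Real.logb 2 C.card + 1) ∧
      IsFairOn C label ∧
      C.card * Real.logb 2 C.card ≤ ∑ u ∈ C, ((label u).length + 4 : ℝ) := by
  rcases C.eq_empty_or_nonempty with rfl | hC
  · exact ⟨fun _ => [], by simp, fun w => by simp, by simp⟩
  have hpos : 0 < C.card := hC.card_pos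
  obtain ⟨label, hle, hfair, hsum⟩ :=
    exists_isFairOn_of_card_lt_two_pow (Nat.lt_pow_succ_log_self one_lt_two C.card)
  refine ⟨label, fun u => ?_, hfair, ?_⟩
  · have h1 : (Nat.log 2 C.card : ℝ) ≤ Real.logb 2 C.card := Real.natLog_le_logb _ _
    have h2 : ((label u).length : ℝ) ≤ Nat.log 2 C.card + 1 := by exact_mod_cast hle u
    linarith
  · have h1 : Real.logb 2 C.card ≤ Nat.log 2 C.card + 1 := by
      rw [Real.logb_le_iff_le_rpow one_lt_two (by positivity)]
      exact_mod_cast (Nat.lt_pow_succ_log_self one_lt_two C.card).le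
    have h2 : 2 ^ Nat.log 2 C.card ≤ C.card := Nat.pow_log_le_self 2 hpos.ne'
    have h3 : (Nat.log 2 C.card + 1) * C.card ≤ ∑ u ∈ C, (label u).length + 4 * C.card := by
      rw [pow_succ, pow_succ] at hsum
      exact hsum.trans (by omega)
    calc _ ≤ _ := mul_le_mul_of_nonneg_left h1 (Nat.cast_nonneg _)
      _ ≤ ((∑ u ∈ C, (label u).length + 4 * C.card : ℕ) : ℝ) := by
        rw [mul_comm]
        exact_mod_cast h3
      _ = _ := by simp [Finset.sum_add_distrib, mul_comm]

end FairLabels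

section FairCoin

/-- The law of a fair bit. -/
def fairCoin : Measure Bool := (PMF.uniformOfFintype Bool).toMeasure

instance : IsProbabilityMeasure fairCoin :=
  PMF.toMeasure.isProbabilityMeasure _

lemma iid_fairCoin_takeFirst_eq (w : List Bool) :
    iid fairCoin {x | takeFirst w.length x = w} = (2⁻¹ : ℝ≥0∞) ^ w.length := by
  simp [iid_takeFirst_eq, fairCoin, List.map_const']

end FairCoin

section Equipartition

variable {U T : Type*} [MeasurableSpace U] {P : Measure U} {κ : U → T} {D : T → Finset U}

/-- The atoms of `P` in the fibre of `κ` over `t` are the elements of the finite set `D t`, and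
they all have the same mass. -/
structure IsEquipartition (P : Measure U) (κ : U → T) (D : T → Finset U) : Prop where
  mem_iff : ∀ {t u}, u ∈ D t ↔ κ u = t ∧ P {u} ≠ 0
  measure_eq : ∀ {t u v}, u ∈ D t → v ∈ D t → P {u} = P {v}

namespace IsEquipartition

variable [Countable U]

lemma ae_mem (h : IsEquipartition P κ D) : ∀ᵐ u ∂P, u ∈ D (κ u) :=
  ae_iff_of_countable.2 fun _ hu => h.mem_iff.2 ⟨rfl, hu⟩

lemma preimage_ae_eq (h : IsEquipartition P κ D) (t : T) :
    (κ ⁻¹' {t} : Set U) =ᵐ[P] (D t : Set U) := by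
  filter_upwards [h.ae_mem] with u hu
  exact propext ⟨fun hκ => (show κ u = t from hκ) ▸ hu, fun hmem => (h.mem_iff.1 hmem).1⟩

variable [DiscreteMeasurableSpace U]

lemma exists_measure_preimage_inter (h : IsEquipartition P κ D) (t : T) :
    ∃ m, (∀ u ∈ D t, P {u} = m) ∧ ∀ (p : U → Prop) [DecidablePred p],
      P (κ ⁻¹' {t} ∩ {v | p v}) = {v ∈ D t | p v}.card * m := by
  obtain ⟨m, hm⟩ : ∃ m, ∀ u ∈ D t, P {u} = m := by
    rcases (D t).eq_empty_or_nonempty with hD | ⟨u, hu⟩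
    exacts [⟨0, by simp [hD]⟩, ⟨P {u}, fun v hv => h.measure_eq hv hu⟩]
  refine ⟨m, hm, fun p _ => ?_⟩
  have hset : (D t : Set U) ∩ {v | p v} = ({v ∈ D t | p v} : Finset U) := by ext; simp
  rw [measure_congr ((h.preimage_ae_eq t).inter (.refl _ {v | p v})), hset, ← sum_measure_singleton,
    Finset.sum_congr rfl fun v hv => hm v (Finset.mem_filter.1 hv).1]
  simp

lemma lintegral_mono_of_sum_le [Countable T] (h : IsEquipartition P κ D) {f g : U → ℝ≥0∞}
    (hfg : ∀ t, ∑ u ∈ D t, f u ≤ ∑ u ∈ D t, g u) : ∫⁻ u, f u ∂P ≤ ∫⁻ u, g u ∂P := by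
  have hcover : ⋃ t, κ ⁻¹' {t} = Set.univ := by ext; simp
  have hsum (f : U → ℝ≥0∞) : ∫⁻ u, f u ∂P = ∑' t, ∑ u ∈ D t, f u * P {u} := by
    rw [← setLIntegral_univ, ← hcover, lintegral_iUnion (fun _ => .of_discrete)
      fun s t hst => Set.disjoint_left.2 fun u hs ht => hst (hs.symm.trans ht)]
    exact tsum_congr fun t => by rw [setLIntegral_congr (h.preimage_ae_eq t), lintegral_finset]
  rw [hsum, hsum]
  refine ENNReal.tsum_le_tsum fun t => ?_
  obtain ⟨m, hm, -⟩ := h.exists_measure_preimage_inter t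
  have hmul (f : U → ℝ≥0∞) : ∑ u ∈ D t, f u * P {u} = (∑ u ∈ D t, f u) * m := by
    rw [Finset.sum_mul]
    exact Finset.sum_congr rfl fun u hu => by rw [hm u hu]
  rw [hmul, hmul]
  exact mul_le_mul_left (hfg t) m

lemma info_eq [MeasurableSpace T] [DiscreteMeasurableSpace T] [IsProbabilityMeasure P]
    (h : IsEquipartition P κ D) {u : U} (hu : u ∈ D (κ u)) :
    info P u = ENNReal.ofReal (Real.logb 2 (D (κ u)).card) + info (P.map κ) (κ u) := by
  have : IsProbabilityMeasure (P.map κ) := Measure.isProbabilityMeasure_map .of_discrete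
  have hP : P.real {u} ≠ 0 := (ENNReal.toReal_pos (h.mem_iff.1 hu).2 (measure_ne_top _ _)).ne'
  have hcard : 0 < (D (κ u)).card := Finset.card_pos.2 ⟨u, hu⟩
  have hmap : (P.map κ).real {κ u} = (D (κ u)).card * P.real {u} := by
    obtain ⟨m, hm, hmeas⟩ := h.exists_measure_preimage_inter (κ u)
    rw [measureReal_def, Measure.map_apply .of_discrete .of_discrete, measureReal_def, hm u hu]
    simpa using congrArg ENNReal.toReal (hmeas fun _ => True)
  rw [info, info, ← ENNReal.ofReal_add (Real.logb_nonneg one_lt_two (by exact_mod_cast hcard))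
    (neg_nonneg.2 (Real.logb_nonpos one_lt_two measureReal_nonneg measureReal_le_one)), hmap,
    Real.logb_mul (by positivity) hP]
  congr 1
  ring

lemma isIIDWord_of_isFairOn (h : IsEquipartition P κ D) {label : U → List Bool}
    (hfair : ∀ t, IsFairOn (D t) label) :
    IsIIDWord P (fun u => (κ u, (label u).length)) Prod.snd label fairCoin := by
  rintro ⟨t, n⟩
  refine Measure.ext_of_singleton fun w => ?_
  rw [Measure.map_apply .of_discrete .of_discrete, Measure.restrict_apply .of_discrete,
    Measure.smul_apply, Measure.map_apply (measurable_takeFirst n) .of_discrete]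
  rcases eq_or_ne w.length n with rfl | hw
  · have hword : label ⁻¹' {w} ∩ (fun u => (κ u, (label u).length)) ⁻¹' {(t, w.length)} =
        κ ⁻¹' {t} ∩ {u | label u = w} := by
      ext u
      simp +contextual [eq_comm, iff_def]
    have hclass : (fun u => (κ u, (label u).length)) ⁻¹' {(t, w.length)} =
        κ ⁻¹' {t} ∩ {u | (label u).length = w.length} := by
      ext u
      simp
    obtain ⟨m, -, hm⟩ := h.exists_measure_preimage_inter t
    have hcancel : (2 : ℝ≥0∞) ^ w.length * 2⁻¹ ^ w.length = 1 := by
      rw [← mul_pow, ENNReal.mul_inv_cancel two_ne_zero ofNat_ne_top, one_pow]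
    rw [hword, hclass, hm, hm, ← hfair t w]
    change _ = _ * iid fairCoin {x | takeFirst w.length x = w}
    rw [iid_fairCoin_takeFirst_eq, Nat.cast_mul, Nat.cast_pow, Nat.cast_ofNat,
      ← mul_one (_ * m), ← hcancel]
    ring
  · have hword : label ⁻¹' {w} ∩ (fun u => (κ u, (label u).length)) ⁻¹' {(t, n)} = ∅ := by
      ext u
      simp only [Set.mem_inter_iff, Set.mem_preimage, Set.mem_singleton_iff, Prod.mk.injEq,
        Set.mem_empty_iff_false, iff_false, not_and]
      rintro rfl -
      exact hw
    have htake : takeFirst (α := Bool) n ⁻¹' {w} = ∅ := by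
      ext x
      simp only [Set.mem_preimage, Set.mem_singleton_iff, Set.mem_empty_iff_false, iff_false]
      rintro rfl
      exact hw (length_takeFirst ..)
    simp [hword, htake]

lemma lintegral_logb_card_le [Countable T] [IsProbabilityMeasure P] (h : IsEquipartition P κ D)
    {label : U → List Bool}
    (hsum : ∀ t, (D t).card * Real.logb 2 (D t).card ≤ ∑ u ∈ D t, ((label u).length + 4 : ℝ)) :
    ∫⁻ u, ENNReal.ofReal (Real.logb 2 (D (κ u)).card) ∂P ≤ ∫⁻ u, (label u).length ∂P + 4 := by
  have hle : ∫⁻ u, ENNReal.ofReal (Real.logb 2 (D (κ u)).card) ∂P ≤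
      ∫⁻ u, ((label u).length + 4) ∂P := h.lintegral_mono_of_sum_le fun t => by
    calc ∑ u ∈ D t, ENNReal.ofReal (Real.logb 2 (D (κ u)).card)
        = ENNReal.ofReal ((D t).card * Real.logb 2 (D t).card) := by
          rw [ENNReal.ofReal_mul (by positivity), ENNReal.ofReal_natCast, ← nsmul_eq_mul]
          exact Finset.sum_eq_card_nsmul fun u hu => by rw [(h.mem_iff.1 hu).1]
      _ ≤ ENNReal.ofReal (∑ u ∈ D t, ((label u).length + 4 : ℝ)) :=
          ENNReal.ofReal_le_ofReal (hsum t)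
      _ = ∑ u ∈ D t, ((label u).length + 4 : ℝ≥0∞) := by
          rw [ENNReal.ofReal_sum_of_nonneg fun _ _ => by positivity]
          refine Finset.sum_congr rfl fun u _ => ?_
          rw [ENNReal.ofReal_add (by positivity) (by positivity)]
          simp
  rwa [lintegral_add_right _ measurable_const, lintegral_const, measure_univ, mul_one] at hle

variable [Countable T] [MeasurableSpace T] [DiscreteMeasurableSpace T] [IsProbabilityMeasure P]

lemma lintegral_info_le (h : IsEquipartition P κ D) (R : Measure T) [IsProbabilityMeasure R]
    (hR : ∀ t, R {t} ≠ 0) :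
    ∫⁻ u, info P u ∂P ≤ ∫⁻ u, ENNReal.ofReal (Real.logb 2 (D (κ u)).card) ∂P +
      ∫⁻ u, info R (κ u) ∂P := by
  have : IsProbabilityMeasure (P.map κ) := Measure.isProbabilityMeasure_map .of_discrete
  rw [lintegral_congr_ae (h.ae_mem.mono fun u hu => h.info_eq hu), lintegral_add_left .of_discrete,
    ← lintegral_map (f := info (P.map κ)) .of_discrete .of_discrete,
    ← lintegral_map (f := info R) .of_discrete .of_discrete]
  exact add_le_add_right (lintegral_info_le_of_forall_ne_zero _ R hR) _

lemma exists_extraction (h : IsEquipartition P κ D) :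
    ∃ label : U → List Bool,
      IsIIDWord P (fun u => (κ u, (label u).length)) Prod.snd label fairCoin ∧
      (∀ᵐ u ∂P, ((label u).length : ℝ≥0∞) ≤ info P u + 1) ∧
      ∀ (R : Measure T) [IsProbabilityMeasure R], (∀ t, R {t} ≠ 0) →
        ∫⁻ u, info P u ∂P ≤ ∫⁻ u, (label u).length ∂P + 4 + ∫⁻ u, info R (κ u) ∂P := by
  choose l hle hfair hsum using fun t => exists_isFairOn (D t)
  have hlabel (t : T) (u : U) (hu : u ∈ D t) : l t u = l (κ u) u := by rw [(h.mem_iff.1 hu).1]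
  refine ⟨fun u => l (κ u) u, h.isIIDWord_of_isFairOn fun t => (hfair t).congr (hlabel t), ?_,
    fun R _ hR => (h.lintegral_info_le R hR).trans ?_⟩
  · filter_upwards [h.ae_mem] with u hu
    rw [h.info_eq hu, ← ENNReal.ofReal_natCast, add_right_comm, ← ENNReal.ofReal_one,
      ← ENNReal.ofReal_add (Real.logb_nonneg one_lt_two ?_) zero_le_one]
    · exact le_add_right (ENNReal.ofReal_le_ofReal (hle _ u))
    · exact_mod_cast Finset.card_pos.2 ⟨u, hu⟩
  · gcongr
    refine h.lintegral_logb_card_le fun t => (hsum t).trans_eq (Finset.sum_congr rfl fun u hu => ?_)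
    rw [hlabel t u hu]

end IsEquipartition

end Equipartition

/-! ### Simulation from fair bits -/

section BitValue

/-- The number with binary digits `w`, the most significant digit coming first. -/
def bitValue (w : List Bool) : ℕ := w.foldl (fun k b => Nat.bit b k) 0

lemma bitValue_append_singleton (w : List Bool) (b : Bool) :
    bitValue (w ++ [b]) = Nat.bit b (bitValue w) := by
  simp [bitValue]

lemma exists_bitValue_eq {n k : ℕ} (hk : k < 2 ^ n) : ∃ w, w.length = n ∧ bitValue w = k := by
  induction n generalizing k with
  | zero => exact ⟨[], rfl, by simp_all [bitValue]⟩
  | succ n ih =>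
    obtain ⟨w, rfl, hw⟩ := ih (k := k.div2) (by rw [Nat.div2_val]; omega)
    exact ⟨w ++ [k.bodd], by simp, by rw [bitValue_append_singleton, hw, Nat.bit_bodd_div2]⟩

lemma inv_two_pow_le_iid_bitValue_eq {n k : ℕ} (hk : k < 2 ^ n) :
    2⁻¹ ^ n ≤ iid fairCoin {x | bitValue (takeFirst n x) = k} := by
  obtain ⟨w, rfl, rfl⟩ := exists_bitValue_eq hk
  rw [← iid_fairCoin_takeFirst_eq]
  exact measure_mono fun x hx => congrArg bitValue hx

lemma ofReal_sub_le_iid_bitValue_mem {a b : ℝ} (ha : 0 ≤ a) (hb : b ≤ 1) (n : ℕ) :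
    ENNReal.ofReal (b - a) ≤
      iid fairCoin {x | a * 2 ^ n ≤ bitValue (takeFirst n x) ∧
        bitValue (takeFirst n x) + 1 ≤ b * 2 ^ n} + 2 * 2⁻¹ ^ n := by
  set I := Finset.Ico ⌈a * 2 ^ n⌉₊ ⌊b * 2 ^ n⌋₊ with hI
  have hcard : (b - a) * 2 ^ n ≤ I.card + 2 := by
    have hceil := Nat.ceil_lt_add_one (show 0 ≤ a * 2 ^ n by positivity)
    have hfloor := Nat.lt_floor_add_one (b * 2 ^ n)
    have hsub : (⌊b * 2 ^ n⌋₊ : ℝ) ≤ I.card + ⌈a * 2 ^ n⌉₊ := by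
      rw [hI, Nat.card_Ico]
      exact_mod_cast le_tsub_add
    linarith
  calc ENNReal.ofReal (b - a) ≤ ENNReal.ofReal ((I.card + 2) * 2⁻¹ ^ n) := by
        refine ENNReal.ofReal_le_ofReal ?_
        rwa [inv_pow, ← div_eq_mul_inv, le_div_iff₀ (by positivity)]
    _ = ∑ k ∈ I, 2⁻¹ ^ n + 2 * 2⁻¹ ^ n := by
        rw [add_mul, ENNReal.ofReal_add (by positivity) (by positivity),
          ENNReal.ofReal_mul (by positivity), ENNReal.ofReal_mul (by positivity),
          ENNReal.ofReal_pow (by positivity), ENNReal.ofReal_inv_of_pos two_pos]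
        simp
    _ ≤ ∑ k ∈ I, iid fairCoin {x | bitValue (takeFirst n x) = k} + 2 * 2⁻¹ ^ n := by
        gcongr with k hk
        refine inv_two_pow_le_iid_bitValue_eq ((Finset.mem_Ico.1 hk).2.trans_le ?_)
        refine Nat.floor_le_of_le ?_
        push_cast
        exact mul_le_of_le_one_left (by positivity) hb
    _ ≤ _ := by
        have hm : Measurable fun x : ℕ → Bool => bitValue (takeFirst n x) :=
          Measurable.of_discrete.comp (measurable_takeFirst n)
        gcongr
        refine (sum_measure_preimage_singleton I fun k _ => hm (.singleton k)).trans_le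
          (measure_mono fun x hx => ?_)
        obtain ⟨hak, hkb⟩ := Finset.mem_Ico.1 (show bitValue (takeFirst n x) ∈ I from hx)
        exact ⟨Nat.ceil_le.1 hak,
          by simpa using (Nat.le_floor_iff' (Nat.succ_ne_zero _)).1 (Nat.succ_le_of_lt hkb)⟩

end BitValue

section Info

variable {V : Type*} [MeasurableSpace V] {Q : Measure V} [IsProbabilityMeasure Q]

lemma tsum_min_pow_le (v : V) :
    ∑' n : ℕ, min (Q {v}) (2 * 2⁻¹ ^ n) ≤ info Q v * Q {v} + 4 * Q {v} := by
  rcases eq_or_ne (Q {v}) 0 with hv | hv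
  · simp [hv]
  set l := Q.real {v}
  have hlQ : ENNReal.ofReal l = Q {v} := ofReal_measureReal
  have hpos : 0 < l := ENNReal.toReal_pos hv (measure_ne_top _ _)
  have hlog : 0 ≤ -Real.logb 2 l :=
    neg_nonneg.2 (Real.logb_nonpos one_lt_two hpos.le measureReal_le_one)
  set N := ⌈-Real.logb 2 l⌉₊
  have hceil : (N : ℝ) ≤ -Real.logb 2 l + 1 := (Nat.ceil_lt_add_one hlog).le
  have hpow : (2⁻¹ : ℝ) ^ N ≤ l := by
    rw [inv_pow, ← Real.rpow_natCast, ← Real.rpow_neg two_pos.le,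
      ← Real.le_logb_iff_rpow_le one_lt_two hpos]
    exact neg_le.1 (Nat.le_ceil _)
  have hpow' : (2⁻¹ : ℝ≥0∞) ^ N ≤ Q {v} := by
    rw [← hlQ, ← ENNReal.ofReal_ofNat 2, ← ENNReal.ofReal_inv_of_pos two_pos,
      ← ENNReal.ofReal_pow (by positivity)]
    exact ENNReal.ofReal_le_ofReal hpow
  have hceil' : (N : ℝ≥0∞) ≤ info Q v + 1 := by
    rw [info, ← ENNReal.ofReal_natCast, ← ENNReal.ofReal_one, ← ENNReal.ofReal_add hlog zero_le_one]
    exact ENNReal.ofReal_le_ofReal hceil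
  calc ∑' n : ℕ, min (Q {v}) (2 * 2⁻¹ ^ n)
      = ∑ n ∈ Finset.range (N + 1), min (Q {v}) (2 * 2⁻¹ ^ n) +
          ∑' n : ℕ, min (Q {v}) (2 * 2⁻¹ ^ (n + (N + 1))) :=
        (Summable.sum_add_tsum_nat_add' ENNReal.summable).symm
    _ ≤ ∑ _ ∈ Finset.range (N + 1), Q {v} + ∑' n : ℕ, 2 * 2⁻¹ ^ (n + (N + 1)) :=
        add_le_add (Finset.sum_le_sum fun _ _ => min_le_left _ _)
          (ENNReal.tsum_le_tsum fun _ => min_le_right _ _)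
    _ = (N + 1) * Q {v} + 2 * 2⁻¹ ^ N := by
        simp_rw [pow_add]
        rw [ENNReal.tsum_mul_left, ENNReal.tsum_mul_right, ENNReal.tsum_geometric,
          ENNReal.one_sub_inv_two, inv_inv, pow_one, mul_comm (2⁻¹ ^ N), ← mul_assoc 2 2⁻¹,
          ENNReal.mul_inv_cancel two_ne_zero ofNat_ne_top]
        simp
    _ ≤ (info Q v + 1 + 1) * Q {v} + 2 * Q {v} := by gcongr
    _ = _ := by ring

variable [Countable V] [DiscreteMeasurableSpace V]

lemma tsum_tsum_min_pow_le :
    ∑' n : ℕ, ∑' v, min (Q {v}) (2 * 2⁻¹ ^ n) ≤ ∫⁻ v, info Q v ∂Q + 4 := by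
  rw [ENNReal.tsum_comm]
  calc ∑' v, ∑' n : ℕ, min (Q {v}) (2 * 2⁻¹ ^ n)
      ≤ ∑' v, (info Q v * Q {v} + 4 * Q {v}) := ENNReal.tsum_le_tsum tsum_min_pow_le
    _ = ∫⁻ v, info Q v ∂Q + ∫⁻ _, 4 ∂Q := by
        rw [ENNReal.tsum_add, lintegral_countable', lintegral_countable']
    _ = _ := by simp

lemma eq_of_forall_measure_singleton_le {R : Measure V} [IsProbabilityMeasure R]
    (h : ∀ v, Q {v} ≤ R {v}) : Q = R := by
  refine Measure.eq_of_le_of_isProbabilityMeasure (Measure.le_iff'.2 fun s => ?_)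
  rw [← Measure.tsum_indicator_apply_singleton _ s .of_discrete,
    ← Measure.tsum_indicator_apply_singleton _ s .of_discrete]
  exact ENNReal.tsum_le_tsum fun v => Set.indicator_le_indicator (h v)

end Info

section Simulation

variable {V : Type*} [LinearOrder V] [MeasurableSpace V] {Q : Measure V} {w : List Bool} {v : V}

/-- The dyadic interval with binary digits `w` lies in the cell `[Q (-∞, v), Q (-∞, v])` of `v`. -/
def Decides (Q : Measure V) (w : List Bool) (v : V) : Prop :=
  Q.real (Set.Iio v) * 2 ^ w.length ≤ bitValue w ∧
    bitValue w + 1 ≤ Q.real (Set.Iic v) * 2 ^ w.length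

/-- The bit words that decide some point. -/
def decisive (Q : Measure V) : Set (List Bool) := {w | ∃ v, Decides Q w v}

lemma Decides.append_singleton (h : Decides Q w v) (b : Bool) : Decides Q (w ++ [b]) v := by
  obtain ⟨hl, hr⟩ := h
  have hbit : (Nat.bit b (bitValue w) : ℝ) = 2 * bitValue w + b.toNat := by
    rw [Nat.bit_val]; push_cast; rfl
  have hb : (b.toNat : ℝ) ≤ 1 := by exact_mod_cast b.toNat_le
  rw [Decides, bitValue_append_singleton, hbit, List.length_append, List.length_singleton, pow_succ,
    ← mul_assoc, ← mul_assoc]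
  constructor <;> linarith [(b.toNat).cast_nonneg (α := ℝ)]

lemma Decides.takeFirst_of_le {x : ℕ → Bool} {m n : ℕ} (h : Decides Q (takeFirst m x) v)
    (hmn : m ≤ n) : Decides Q (takeFirst n x) v := by
  induction n, hmn using Nat.le_induction with
  | base => exact h
  | succ n _ ih => rw [takeFirst_succ]; exact ih.append_singleton _

variable [IsProbabilityMeasure Q]

lemma Decides.unique {v' : V} (h : Decides Q w v) (h' : Decides Q w v') : v = v' := by
  have hle {a b : V} (hab : a < b) (ha : Decides Q w a) (hb : Decides Q w b) : False := by
    have hpow : (0 : ℝ) ≤ 2 ^ w.length := by positivity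
    have hmono : Q.real (Set.Iic a) ≤ Q.real (Set.Iio b) :=
      measureReal_mono (Set.Iic_subset_Iio.2 hab)
    linarith [mul_le_mul_of_nonneg_right hmono hpow, ha.2, hb.1]
  by_contra hne
  rcases lt_or_gt_of_ne hne with hlt | hlt
  exacts [hle hlt h h', hle hlt h' h]

lemma Decides.firstWord_decisive {x : ℕ → Bool} {n : ℕ} (h : Decides Q (takeFirst n x) v) :
    Decides Q (firstWord (decisive Q) x) v := by
  obtain ⟨v', hv'⟩ := firstWord_mem (S := decisive Q) ⟨n, v, h⟩
  have hle : firstLen (decisive Q) x ≤ n := Nat.sInf_le ⟨v, h⟩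
  exact h.unique (hv'.takeFirst_of_le hle) ▸ hv'

variable [DiscreteMeasurableSpace V]

lemma measureReal_Iic (v : V) : Q.real (Set.Iic v) = Q.real (Set.Iio v) + Q.real {v} := by
  rw [← Set.Iio_union_right, measureReal_union (by simp) .of_discrete]

lemma Decides.measure_singleton_ne_zero (h : Decides Q w v) : Q {v} ≠ 0 := fun h0 => by
  have := h.2
  rw [measureReal_Iic, measureReal_def Q {v}, h0, ENNReal.toReal_zero, add_zero] at this
  linarith [h.1]

lemma measure_le_iid_decides (v : V) (n : ℕ) :
    Q {v} ≤ iid fairCoin {x | Decides Q (takeFirst n x) v} + min (Q {v}) (2 * 2⁻¹ ^ n) := by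
  rw [add_min]
  refine le_min le_add_self ?_
  have h := ofReal_sub_le_iid_bitValue_mem (measureReal_nonneg (μ := Q) (s := Set.Iio v))
    (measureReal_le_one (μ := Q) (s := Set.Iic v)) n
  rw [measureReal_Iic, add_sub_cancel_left, ofReal_measureReal] at h
  simpa only [Decides, length_takeFirst, ← measureReal_Iic] using h

lemma measure_le_iid_decides_firstWord (v : V) :
    Q {v} ≤ iid fairCoin {x | Decides Q (firstWord (decisive Q) x) v} := by
  set c := iid fairCoin {x | Decides Q (firstWord (decisive Q) x) v}
  have hlim : Tendsto (fun n : ℕ => c + 2 * 2⁻¹ ^ n) atTop (nhds (c + 2 * 0)) :=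
    tendsto_const_nhds.add (ENNReal.Tendsto.const_mul
      (ENNReal.tendsto_pow_atTop_nhds_zero_of_lt_one (by simp)) (.inr ofNat_ne_top))
  rw [mul_zero, add_zero] at hlim
  refine ge_of_tendsto' hlim fun n => (measure_le_iid_decides v n).trans ?_
  exact add_le_add (measure_mono fun x hx => Decides.firstWord_decisive hx) (min_le_right _ _)

variable [Countable V]

lemma iid_avoiding_decisive_le (n : ℕ) :
    iid fairCoin (avoiding (decisive Q) n) ≤ ∑' v, min (Q {v}) (2 * 2⁻¹ ^ n) := by
  set decided := ⋃ v, {x | Decides Q (takeFirst n x) v} with hdecided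
  have hmeas (v : V) : MeasurableSet {x | Decides Q (takeFirst n x) v} :=
    measurable_takeFirst n (.of_discrete (s := {w | Decides Q w v}))
  have hdisj : Disjoint (avoiding (decisive Q) n) decided :=
    Set.disjoint_left.2 fun x hx hd => hx n le_rfl (Set.mem_iUnion.1 hd)
  rw [← ENNReal.add_le_add_iff_left (measure_ne_top (iid fairCoin) decided), add_comm,
    ← measure_union hdisj (.iUnion hmeas)]
  calc iid fairCoin (avoiding (decisive Q) n ∪ decided)
      ≤ ∑' v, Q {v} := by
        simpa using prob_le_one.trans_eq (by simpa using lintegral_countable' (μ := Q) 1)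
    _ ≤ ∑' v, iid fairCoin {x | Decides Q (takeFirst n x) v} +
          ∑' v, min (Q {v}) (2 * 2⁻¹ ^ n) := by
        rw [← ENNReal.tsum_add]
        exact ENNReal.tsum_le_tsum fun v => measure_le_iid_decides v n
    _ = _ := by
        rw [hdecided, measure_iUnion (fun v v' hne => Set.disjoint_left.2
          fun x hv hv' => hne (hv.unique hv')) hmeas]

end Simulation

section Simulation

variable {V : Type*} [Countable V] [MeasurableSpace V] [DiscreteMeasurableSpace V]

lemma exists_simulation (Q : Measure V) [IsProbabilityMeasure Q] (hQ : ∫⁻ v, info Q v ∂Q ≠ ∞) :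
    ∃ (S : Set (List Bool)) (G : List Bool → V),
      (∀ᵐ x ∂iid fairCoin, ∃ n, takeFirst n x ∈ S) ∧ (∀ w, Q {G w} ≠ 0) ∧
      (iid fairCoin).map (fun x => G (firstWord S x)) = Q ∧
      ∫⁻ x, (firstLen S x : ℝ≥0∞) ∂iid fairCoin ≤ ∫⁻ v, info Q v ∂Q + 4 := by
  classical
  let _ := Encodable.ofCountable V
  let _ : LinearOrder V := LinearOrder.lift' Encodable.encode Encodable.encode_injective
  have hsum : ∑' n, iid fairCoin (avoiding (decisive Q) n) ≤ ∫⁻ v, info Q v ∂Q + 4 :=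
    (ENNReal.tsum_le_tsum iid_avoiding_decisive_le).trans tsum_tsum_min_pow_le
  have hS : ∀ᵐ x ∂iid fairCoin, ∃ n, takeFirst n x ∈ decisive Q :=
    ae_stops_of_tsum_avoiding_ne_top (ne_top_of_le_ne_top (by finiteness) hsum)
  obtain ⟨x₀, n₀, v₀, h₀⟩ := hS.exists
  let G (w : List Bool) : V := if h : w ∈ decisive Q then h.choose else v₀
  have hG {w : List Bool} {v : V} (h : Decides Q w v) : G w = v := by
    have hw : w ∈ decisive Q := ⟨v, h⟩
    simpa only [G, dif_pos hw] using hw.choose_spec.unique h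
  have hm : Measurable fun x => G (firstWord (decisive Q) x) :=
    (Measurable.of_discrete (f := G)).comp measurable_firstWord
  have := Measure.isProbabilityMeasure_map (μ := iid fairCoin) hm.aemeasurable
  refine ⟨decisive Q, G, hS, fun w => ?_, (eq_of_forall_measure_singleton_le fun v => ?_).symm,
    (lintegral_firstLen hS).trans_le hsum⟩
  · by_cases h : w ∈ decisive Q
    · obtain ⟨v, hv⟩ := h
      exact hG hv ▸ hv.measure_singleton_ne_zero
    · simpa only [G, dif_neg h] using h₀.measure_singleton_ne_zero
  · rw [Measure.map_apply hm (.singleton v)]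
    exact (measure_le_iid_decides_firstWord v).trans (measure_mono fun x => hG)

end Simulation

section WordSimulation

variable {α : Type*} [MeasurableSpace α] {π : Measure α} [IsProbabilityMeasure π]

lemma info_eq_sum {U : Type*} [MeasurableSpace U] {P : Measure U} {v : U} {u : List α}
    (hπ : ∀ a, π {a} ≠ 0) (h : P {v} = (u.map fun a => π {a}).prod) :
    info P v = (u.map (info π)).sum := by
  rw [info, measureReal_def, h]
  clear h
  have hreal (a : α) : (π {a}).toReal ≠ 0 := (ENNReal.toReal_pos (hπ a) (measure_ne_top _ _)).ne'
  have hprod (u : List α) : (u.map fun a => π {a}).prod.toReal ≠ 0 := by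
    induction u <;> simp_all
  have hle (u : List α) : (u.map fun a => π {a}).prod ≤ 1 := by
    induction u with
    | nil => simp
    | cons a u ih => simpa using mul_le_one' prob_le_one ih
  induction u with
  | nil => simp
  | cons a u ih =>
    rw [List.map_cons, List.prod_cons, List.map_cons, List.sum_cons, ENNReal.toReal_mul,
      Real.logb_mul (hreal a) (hprod u), neg_add, ENNReal.ofReal_add, ih, info, measureReal_def]
    · exact neg_nonneg.2 (Real.logb_nonpos one_lt_two measureReal_nonneg measureReal_le_one)
    · exact neg_nonneg.2 (Real.logb_nonpos one_lt_two toReal_nonneg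
        (ENNReal.toReal_le_of_le_ofReal zero_le_one (by simpa using hle u)))

variable [Countable α] [DiscreteMeasurableSpace α]

lemma lintegral_info_map_takeFirst (hπ : ∀ a, π {a} ≠ 0) (n : ℕ) :
    ∫⁻ u, info ((iid π).map (takeFirst n)) u ∂(iid π).map (takeFirst n) =
      n * ∫⁻ a, info π a ∂π := by
  have hinfo (x : ℕ → α) : info ((iid π).map (takeFirst n)) (takeFirst n x) =
      ∑ i ∈ Finset.range n, info π (x i) := by
    rw [← sum_map_takeFirst]
    refine info_eq_sum hπ ?_
    rw [Measure.map_apply (measurable_takeFirst n) (.singleton _), ← iid_takeFirst_eq,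
      length_takeFirst]
    rfl
  have hm (i : ℕ) : MeasurePreserving (fun x : ℕ → α => x i) (iid π) π :=
    measurePreserving_eval_infinitePi _ i
  have hmeas (i : ℕ) : Measurable fun x : ℕ → α => info π (x i) :=
    (Measurable.of_discrete (f := info π)).comp (hm i).measurable
  rw [lintegral_map .of_discrete (measurable_takeFirst n), lintegral_congr hinfo,
    lintegral_finsetSum _ fun i _ => hmeas i]
  simp [(hm _).lintegral_comp Measurable.of_discrete]

lemma exists_word_simulation (hπ : ∀ a, π {a} ≠ 0) (h : ∫⁻ a, info π a ∂π ≠ ∞) (n : ℕ) :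
    ∃ (S : Set (List Bool)) (G : List Bool → List α),
      (∀ᵐ x ∂iid fairCoin, ∃ m, takeFirst m x ∈ S) ∧ (∀ w, (G w).length = n) ∧
      (iid fairCoin).map (fun x => G (firstWord S x)) = (iid π).map (takeFirst n) ∧
      ∫⁻ x, (firstLen S x : ℝ≥0∞) ∂iid fairCoin ≤ n * ∫⁻ a, info π a ∂π + 4 := by
  have hinfo := lintegral_info_map_takeFirst hπ n
  obtain ⟨S, G, hS, hG, hlaw, hmean⟩ := exists_simulation ((iid π).map (takeFirst n))
    (hinfo ▸ mul_ne_top (natCast_ne_top n) h)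
  refine ⟨S, G, hS, fun w => ?_, hlaw, hinfo ▸ hmean⟩
  by_contra hlen
  refine hG w ?_
  rw [Measure.map_apply (measurable_takeFirst n) (.singleton _)]
  refine measure_mono_null (fun x hx => hlen ?_) measure_empty
  rw [← show takeFirst n x = G w from hx, length_takeFirst]

end WordSimulation

/-! ### Coding by blocks -/

section LetterCount

variable {α : Type*}

open Classical in
/-- The number of occurrences of each letter in a word, the type of the word. -/
def letterCount (u : List α) : α → ℕ := fun a => u.count a

lemma letterCount_eq_iff {u v : List α} : letterCount u = letterCount v ↔ u.Perm v := by
  classical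
  simp [List.perm_iff_count, funext_iff, letterCount]

lemma sum_letterCount [Fintype α] (u : List α) : ∑ a, letterCount u a = u.length := by
  classical
  simpa [letterCount] using Multiset.sum_count_eq_card (s := Finset.univ) (m := (u : Multiset α))
    fun a _ => Finset.mem_univ a

lemma finite_letterCount_eq [Finite α] (t : α → ℕ) : {u | letterCount u = t}.Finite := by
  have := Fintype.ofFinite α
  exact (List.finite_length_eq α (∑ a, t a)).subset fun u hu => by
    rw [Set.mem_ofPred_eq, ← sum_letterCount u, show letterCount u = t from hu]

end LetterCount

section GeometricReference

open ProbabilityTheory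

lemma exists_info_geometricMeasure_eq {ε : ℝ} (hε : 0 < ε) :
    ∃ (r : unitInterval) (K : ℝ≥0∞), K ≠ ∞ ∧ (∀ n, geometricMeasure r {n} ≠ 0) ∧
      ∀ n : ℕ, info (geometricMeasure r) n = K + ENNReal.ofReal ε * n := by
  have hpos : (0 : ℝ) < 2 ^ (-ε) := by positivity
  have hlt : (2 : ℝ) ^ (-ε) < 1 := Real.rpow_lt_one_of_one_lt_of_neg one_lt_two (neg_neg_of_pos hε)
  set r : unitInterval := ⟨1 - 2 ^ (-ε), by linarith, by linarith⟩ with hr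
  have hr0 : r ≠ 0 := fun h => by
    have := congrArg Subtype.val h
    simp only [hr, Set.Icc.coe_zero] at this
    linarith
  have hr1 : r ≠ 1 := fun h => by
    have := congrArg Subtype.val h
    simp only [hr, Set.Icc.coe_one] at this
    linarith
  have hlog : 0 ≤ -Real.logb 2 r :=
    neg_nonneg.2 (Real.logb_nonpos one_lt_two r.2.1 r.2.2)
  refine ⟨r, ENNReal.ofReal (-Real.logb 2 r), ofReal_ne_top, fun n hn => ?_, fun n => ?_⟩
  · exact (geometricMeasure_real_singleton_pos hr0 hr1 n).ne' (by rw [measureReal_def, hn]; rfl)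
  · rw [info, geometricMeasure_real_singleton hr0, ← ENNReal.ofReal_natCast,
      ← ENNReal.ofReal_mul hε.le, ← ENNReal.ofReal_add hlog (by positivity),
      show 1 - (r : ℝ) = 2 ^ (-ε) from _root_.sub_sub_cancel _ _,
      Real.logb_mul (by positivity) (by simpa using hr0), Real.logb_pow,
      Real.logb_rpow two_pos one_lt_two.ne']
    ring_nf

lemma exists_geometric_reference (α : Type*) [Fintype α] {ε : ℝ} (hε : 0 < ε) :
    ∃ (K : ℝ≥0∞) (R : Measure (α → ℕ)), K ≠ ∞ ∧ IsProbabilityMeasure R ∧ (∀ t, R {t} ≠ 0) ∧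
      ∀ t, info R t = K + ENNReal.ofReal ε * (∑ a, t a : ℕ) := by
  obtain ⟨r, K, hK, hr, hinfo⟩ := exists_info_geometricMeasure_eq hε
  have hpi (t : α → ℕ) : Measure.pi (fun _ : α => geometricMeasure r) {t} =
      (Finset.univ.toList.map fun a => geometricMeasure r {t a}).prod := by
    simp [Measure.pi_singleton]
  refine ⟨Fintype.card α * K, .pi fun _ => geometricMeasure r, by finiteness, inferInstance,
    fun t => ?_, fun t => ?_⟩
  · simp [Measure.pi_singleton, Finset.prod_ne_zero_iff, hr]
  · rw [info_eq_sum (π := geometricMeasure r) (u := Finset.univ.toList.map t) hr (by simp [hpi])]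
    simp [hinfo, Finset.sum_add_distrib, Finset.mul_sum]

end GeometricReference

/-- A one-sided code that processes its input block by block, the blocks being delimited by the
stopping rule `S`; nothing is required where `S` stops at time `0` or does not stop at all. -/
def IsBlockCode {α β : Type*} (S : Set (List α)) (Y : (ℕ → α) → ℕ → β) : Prop :=
  ∀ x, 0 < firstLen S x → dropFirst (firstLen S x) (Y x) = Y (afterFirst S x)

section BlockLaw

variable {α : Type*} [MeasurableSpace α] [DiscreteMeasurableSpace α] {π : Measure α}
  [IsProbabilityMeasure π] {S : Set (List α)}

section

variable [Countable α] (hS : ∀ᵐ x ∂iid π, ∃ n, takeFirst n x ∈ S)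
include hS

lemma lintegral_sum_map_firstWord (g : α → ℝ≥0∞) :
    ∫⁻ u, (u.map g).sum ∂(iid π).map (firstWord S) =
      (∑' m, iid π (avoiding S m)) * ∫⁻ a, g a ∂π := by
  rw [lintegral_map .of_discrete measurable_firstWord, ← lintegral_sum_firstLen hS]
  simp only [firstWord, sum_map_takeFirst]

lemma map_firstWord_singleton_ne_zero_iff (hπ : ∀ a, π {a} ≠ 0) {u : List α} :
    (iid π).map (firstWord S) {u} ≠ 0 ↔ u ∈ firstWords S := by
  simp [map_firstWord_singleton hS, List.prod_eq_zero_iff, hπ]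

lemma lintegral_info_map_firstWord (hπ : ∀ a, π {a} ≠ 0) :
    ∫⁻ u, info ((iid π).map (firstWord S)) u ∂(iid π).map (firstWord S) =
      (∑' m, iid π (avoiding S m)) * ∫⁻ a, info π a ∂π := by
  rw [← lintegral_sum_map_firstWord hS]
  refine lintegral_congr_ae (ae_iff_of_countable.2 fun u hu => info_eq_sum hπ ?_)
  rw [map_firstWord_singleton hS,
    Set.indicator_of_mem ((map_firstWord_singleton_ne_zero_iff hS hπ).1 hu)]

lemma lintegral_length_map_firstWord :
    ∫⁻ u, (u.length : ℝ≥0∞) ∂(iid π).map (firstWord S) = ∑' m, iid π (avoiding S m) := by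
  simpa using lintegral_sum_map_firstWord hS fun _ => 1

end

lemma isEquipartition_letterCount [Finite α] (hπ : ∀ a, π {a} ≠ 0)
    (hS : ∀ᵐ x ∂iid π, ∃ n, takeFirst n x ∈ S) :
    ∃ D, IsEquipartition ((iid π).map (firstWord S)) letterCount D := by
  have hfin (t : α → ℕ) : {u | letterCount u = t ∧ (iid π).map (firstWord S) {u} ≠ 0}.Finite :=
    (finite_letterCount_eq t).subset fun u hu => hu.1
  refine ⟨fun t => (hfin t).toFinset, by simp, ?_⟩
  simp only [Set.Finite.mem_toFinset, Set.mem_ofPred_eq, map_firstWord_singleton_ne_zero_iff hS hπ]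
  rintro t u v ⟨rfl, hu⟩ ⟨htype, hv⟩
  rw [map_firstWord_singleton hS, map_firstWord_singleton hS, Set.indicator_of_mem hu,
    Set.indicator_of_mem hv]
  exact ((letterCount_eq_iff.1 htype).symm.map _).prod_eq

lemma exists_block_labels [Fintype α] (hπ : ∀ a, π {a} ≠ 0)
    (hS : ∀ᵐ x ∂iid π, ∃ n, takeFirst n x ∈ S) (hL : ∑' m, iid π (avoiding S m) ≠ ∞)
    {R : Measure (α → ℕ)} [IsProbabilityMeasure R] {K ε : ℝ≥0∞} (hR : ∀ t, R {t} ≠ 0)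
    (hinfo : ∀ t, info R t = K + ε * (∑ a, t a : ℕ)) :
    ∃ label : List α → List Bool,
      IsIIDWord ((iid π).map (firstWord S)) (fun u => (letterCount u, (label u).length)) Prod.snd
        label fairCoin ∧
      ∫⁻ u, ((label u).length : ℝ≥0∞) ∂(iid π).map (firstWord S) ≠ ∞ ∧
      (∑' m, iid π (avoiding S m)) * ∫⁻ a, info π a ∂π ≤
        ∫⁻ u, ((label u).length : ℝ≥0∞) ∂(iid π).map (firstWord S) + 4 +
          (K + ε * ∑' m, iid π (avoiding S m)) := by
  obtain ⟨D, hD⟩ := isEquipartition_letterCount hπ hS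
  obtain ⟨label, hiid, hle, hge⟩ := hD.exists_extraction
  refine ⟨label, hiid, ne_top_of_le_ne_top ?_ (lintegral_mono_ae hle), ?_⟩
  · rw [lintegral_add_right _ measurable_const, lintegral_info_map_firstWord hS hπ, lintegral_one,
      measure_univ]
    exact add_ne_top.2 ⟨mul_ne_top hL (lintegral_info_ne_top π), one_ne_top⟩
  · have h := hge R hR
    simp only [hinfo, sum_letterCount] at h
    rwa [lintegral_add_left measurable_const, lintegral_const_mul _ .of_discrete,
      lintegral_const, measure_univ, mul_one, lintegral_length_map_firstWord hS,
      lintegral_info_map_firstWord hS hπ] at h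

variable {β : Type*} [Countable β] [MeasurableSpace β] [DiscreteMeasurableSpace β] {ρ : Measure β}
  [IsProbabilityMeasure ρ]

theorem exists_block_code [Fintype α] (hπ : ∀ a, π {a} ≠ 0) (hρ : ∀ b, ρ {b} ≠ 0)
    (hH : ∫⁻ b, info ρ b ∂ρ ≠ ∞) (hnil : [] ∉ S) (hL : ∑' m, iid π (avoiding S m) ≠ ∞)
    {R : Measure (α → ℕ)} [IsProbabilityMeasure R] {K ε : ℝ≥0∞} (hR : ∀ t, R {t} ≠ 0)
    (hinfo : ∀ t, info R t = K + ε * (∑ a, t a : ℕ))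
    (hgap : (∑' m, iid π (avoiding S m)) * ∫⁻ b, info ρ b ∂ρ + 4 + 4 +
      (K + ε * ∑' m, iid π (avoiding S m)) <
        (∑' m, iid π (avoiding S m)) * ∫⁻ a, info π a ∂π) :
    ∃ Y : (ℕ → α) → ℕ → β, MeasurePreserving Y (iid π) (iid ρ) ∧ IsBlockCode S Y := by
  have hS := ae_stops_of_tsum_avoiding_ne_top hL
  obtain ⟨label, hiid, hfin, hlower⟩ := exists_block_labels hπ hS hL hR hinfo
  -- A class records the type of a block and the number of bits it yields, hence also its length.
  let len (c : (α → ℕ) × ℕ) : ℕ := max 1 (∑ a, c.1 a)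
  choose T G hT hG hlaw hmean using fun c => exists_word_simulation hρ hH (len c)
  have hlenS {x : ℕ → α} (hx : 0 < firstLen S x) :
      len (letterCount (firstWord S x), (label (firstWord S x)).length) = firstLen S x := by
    simp only [len, sum_letterCount, length_firstWord, max_eq_right (Nat.one_le_of_lt hx)]
  have hlen : ∫⁻ u, (len (letterCount u, (label u).length) : ℝ≥0∞) ∂(iid π).map (firstWord S) =
      ∑' m, iid π (avoiding S m) := by
    rw [← lintegral_firstLen hS, lintegral_map .of_discrete measurable_firstWord]
    refine lintegral_congr_ae (hS.mono fun x hx => ?_)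
    refine congrArg Nat.cast (hlenS (Nat.pos_of_ne_zero fun h0 => hnil ?_))
    simpa [firstWord, h0, takeFirst_zero] using firstWord_mem hx
  have hpop : ∫⁻ u, ∫⁻ t, (firstLen (T (letterCount u, (label u).length)) t : ℝ≥0∞) ∂iid fairCoin
      ∂(iid π).map (firstWord S) < ∫⁻ u, ((label u).length : ℝ≥0∞) ∂(iid π).map (firstWord S) := by
    refine (lintegral_mono fun u => hmean _).trans_lt ?_
    rw [lintegral_add_right _ measurable_const, lintegral_mul_const _ .of_discrete, hlen,
      lintegral_const, measure_univ, mul_one]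
    by_contra! h
    exact (hgap.trans_le (hlower.trans (by gcongr))).false
  obtain ⟨Y, hY, hcode⟩ := exists_code_of_labels
    (cl := fun u : List α => (letterCount u, (label u).length)) (N := Prod.snd) (label := label)
    (measurePreserving_firstWord_afterFirst hS) .of_discrete .of_discrete (fun u => rfl) hiid hT hG
    (fun c => lt_max_of_lt_left one_pos) hlaw hfin hpop
  exact ⟨Y, hY, fun x hx => by simpa only [hlenS hx] using hcode x⟩

theorem exists_marker_code [Finite α] (hπ : ∀ a, π {a} ≠ 0) (hρ : ∀ b, ρ {b} ≠ 0)
    (hH : ∫⁻ b, info ρ b ∂ρ < ∫⁻ a, info π a ∂π) :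
    ∃ w : List α, w ≠ [] ∧ IsUnbordered w ∧ ∑' m, iid π (avoiding (endsIn w) m) ≠ ∞ ∧
      ∃ Y : (ℕ → α) → ℕ → β, MeasurePreserving Y (iid π) (iid ρ) ∧ IsBlockCode (endsIn w) Y := by
  have := Fintype.ofFinite α
  have := nontrivial_of_lintegral_info_ne_zero (zero_le.trans_lt hH).ne'
  obtain ⟨ε, hε, hgap⟩ := ENNReal.lt_iff_exists_add_pos_lt.1 hH
  obtain ⟨K, R, hK, _, hR, hinfo⟩ := exists_geometric_reference α (ε := ε) (by exact_mod_cast hε)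
  rw [ENNReal.ofReal_coe_nnreal] at hinfo
  obtain ⟨d, hd, hadd⟩ : ∃ d ≠ 0, ∫⁻ b, info ρ b ∂ρ + ε + d = ∫⁻ a, info π a ∂π :=
    ⟨_, (tsub_pos_of_lt hgap).ne', add_tsub_cancel_of_le hgap.le⟩
  obtain ⟨n, hn⟩ := ENNReal.exists_nat_mul_gt hd (b := 4 + 4 + K) (by finiteness)
  obtain ⟨w, hw, hnw⟩ := exists_isUnbordered_length_ge (α := α) (n + 1)
  have hL := hw.tsum_avoiding_endsIn_ne_top hπ
  have hw0 : w ≠ [] := List.ne_nil_of_length_pos (by omega)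
  have hle : (n : ℝ≥0∞) ≤ ∑' m, iid π (avoiding (endsIn w) m) :=
    le_trans (by exact_mod_cast (by omega : n ≤ w.length)) (length_le_tsum_avoiding_endsIn w)
  refine ⟨w, hw0, hw, hL, exists_block_code hπ hρ hH.ne_top (by simpa [endsIn] using hw0) hL hR
    hinfo ?_⟩
  set L := ∑' m, iid π (avoiding (endsIn w) m)
  have hfin := hH.ne_top
  calc L * ∫⁻ b, info ρ b ∂ρ + 4 + 4 + (K + ε * L)
      = L * (∫⁻ b, info ρ b ∂ρ + ε) + (4 + 4 + K) := by ring
    _ < L * (∫⁻ b, info ρ b ∂ρ + ε) + L * d :=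
        ENNReal.add_lt_add_left (by finiteness) (hn.trans_le (by gcongr))
    _ = L * ∫⁻ a, info π a ∂π := by rw [← mul_add, hadd]

end BlockLaw

/-! ### Two-sided codes -/

section Future

variable {α : Type*}

/-- The one-sided sequence read off `x` from position `t` on. -/
def future (t : ℤ) (x : ℤ → α) : ℕ → α := fun n => x (t + n)

lemma dropFirst_future (n : ℕ) (t : ℤ) (x : ℤ → α) :
    dropFirst n (future t x) = future (t + n) x := by
  funext i
  simp [dropFirst, future, add_assoc]

lemma future_shift (t : ℤ) (x : ℤ → α) : future t (shift x) = future (t + 1) x := by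
  funext i
  simp only [future, shift, add_right_comm]

variable [MeasurableSpace α]

@[fun_prop]
lemma measurable_future (t : ℤ) : Measurable (future t : (ℤ → α) → ℕ → α) :=
  measurable_pi_lambda _ fun _ => measurable_pi_apply _

lemma measurePreserving_future (π : Measure α) [IsProbabilityMeasure π] (t : ℤ) :
    MeasurePreserving (future t) (Measure.infinitePi fun _ : ℤ => π) (iid π) :=
  ⟨measurable_future t, Measure.map_infinitePi_infinitePi_of_inj (f := fun n : ℕ => t + n)
    ((add_right_injective t).comp Nat.cast_injective)⟩

lemma ext_of_future_le [Countable α] [DiscreteMeasurableSpace α] {μ ν : Measure (ℤ → α)}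
    [IsProbabilityMeasure μ] [IsProbabilityMeasure ν]
    (h : ∀ (t : ℤ) (E : Set (ℕ → α)), MeasurableSet E → μ (future t ⁻¹' E) ≤ ν (future t ⁻¹' E)) :
    μ = ν := by
  classical
  refine ext_of_cylinder_le fun F y => ?_
  obtain ⟨t, ht⟩ := F.bddBelow
  have hF : {x : ℤ → α | ∀ i ∈ F, x i = y i} =
      future t ⁻¹' {z | ∀ n ∈ F.image fun i => (i - t).toNat, z n = future t y n} := by
    ext x
    simp only [Set.mem_preimage, Set.mem_ofPred_eq, Finset.forall_mem_image]
    refine forall₂_congr fun i hi => ?_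
    have hti : t + ((i - t).toNat : ℤ) = i := by
      have := ht hi
      omega
    simp only [future, hti]
  rw [hF]
  exact h t _ (measurableSet_cylinder _ _)

end Future

section RestartCode

variable {α β : Type*} (w : List α)

/-- An occurrence of the marker `w` in `x` ends right before position `n`. -/
def EndsAt (n : ℤ) (x : ℤ → α) : Prop := future (n - w.length) x ∈ startingWith w

/-- The distance from position `n` back to the last marker ending there or before, and `0` if there
is none. -/
def lag (n : ℤ) (x : ℤ → α) : ℕ := sInf {d : ℕ | EndsAt w (n - d) x}

/-- The two-sided code that restarts the one-sided code `Y` after each occurrence of the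
marker `w`. -/
def restartCode (Y : (ℕ → α) → ℕ → β) (x : ℤ → α) (n : ℤ) : β :=
  Y (future (n - lag w n x) x) (lag w n x)

variable {w}

lemma endsAt_shift (n : ℤ) (x : ℤ → α) : EndsAt w n (shift x) ↔ EndsAt w (n + 1) x := by
  rw [EndsAt, EndsAt, future_shift, sub_add_eq_add_sub]

lemma lag_shift (n : ℤ) (x : ℤ → α) : lag w n (shift x) = lag w (n + 1) x := by
  simp only [lag, endsAt_shift, sub_add_eq_add_sub]

lemma restartCode_shift (Y : (ℕ → α) → ℕ → β) (x : ℤ → α) :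
    restartCode w Y (shift x) = shift (restartCode w Y x) := by
  funext n
  simp only [restartCode, shift, lag_shift, future_shift, sub_add_eq_add_sub]

lemma takeFirst_dropFirst_mem_endsIn_iff {s m : ℕ} (hm : w.length ≤ m) {x : ℕ → α} :
    takeFirst m (dropFirst s x) ∈ endsIn w ↔ takeFirst (s + m) x ∈ endsIn w := by
  obtain ⟨l, rfl⟩ := Nat.exists_eq_add_of_le' hm
  rw [takeFirst_mem_endsIn_iff, takeFirst_mem_endsIn_iff]
  simp only [← add_assoc, Nat.add_right_cancel_iff, exists_eq_left', dropFirst_dropFirst]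

lemma takeFirst_future_mem_endsIn_iff {t : ℤ} {m : ℕ} (hm : w.length ≤ m) {x : ℤ → α} :
    takeFirst m (future t x) ∈ endsIn w ↔ EndsAt w (t + m) x := by
  obtain ⟨l, rfl⟩ := Nat.exists_eq_add_of_le' hm
  rw [takeFirst_mem_endsIn_iff]
  simp only [Nat.add_right_cancel_iff, exists_eq_left', dropFirst_future, EndsAt, Nat.cast_add,
    ← add_assoc, add_sub_cancel_right]

lemma length_le_of_takeFirst_mem_endsIn {m : ℕ} {x : ℕ → α} (h : takeFirst m x ∈ endsIn w) :
    w.length ≤ m := by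
  simpa using List.IsSuffix.length_le h

lemma IsBlockCode.dropFirst_eq {Y : (ℕ → α) → ℕ → β} (hY : IsBlockCode (endsIn w) Y)
    (hw : IsUnbordered w) (hw0 : w ≠ []) {m : ℕ} {x : ℕ → α} (hx : takeFirst m x ∈ endsIn w) :
    dropFirst m (Y x) = Y (dropFirst m x) := by
  induction m using Nat.strong_induction_on generalizing x with
  | _ m ih =>
    obtain ⟨s, hs⟩ : ∃ s, firstLen (endsIn w) x = s := ⟨_, rfl⟩
    have hsm : s ≤ m := hs ▸ Nat.sInf_le hx
    have hsx : takeFirst s x ∈ endsIn w := hs ▸ firstWord_mem ⟨m, hx⟩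
    have hs0 : 0 < s :=
      (List.length_pos_iff.2 hw0).trans_le (length_le_of_takeFirst_mem_endsIn hsx)
    have hfirst : dropFirst s (Y x) = Y (dropFirst s x) := by
      subst hs
      exact hY x hs0
    rcases hsm.eq_or_lt with rfl | hlt
    · exact hfirst
    · have hle : s + w.length ≤ m := by
        obtain ⟨i, hi, hxi⟩ := takeFirst_mem_endsIn_iff.1 hsx
        obtain ⟨j, rfl, hxj⟩ := takeFirst_mem_endsIn_iff.1 hx
        have := hw.add_length_le hxi hxj (by omega)
        omega
      have hrest := ih (m - s) (by omega) (x := dropFirst s x)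
        ((takeFirst_dropFirst_mem_endsIn_iff (by omega)).2 (by rwa [Nat.add_sub_cancel' hsm]))
      rwa [← hfirst, dropFirst_dropFirst, dropFirst_dropFirst, Nat.add_sub_cancel' hsm] at hrest

lemma future_restartCode {Y : (ℕ → α) → ℕ → β} (hY : IsBlockCode (endsIn w) Y)
    (hw : IsUnbordered w) (hw0 : w ≠ []) {t : ℤ} {m : ℕ} {x : ℤ → α}
    (hx : takeFirst m (future t x) ∈ endsIn w) :
    future (t + m) (restartCode w Y x) = dropFirst m (Y (future t x)) := by
  have hm := length_le_of_takeFirst_mem_endsIn hx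
  funext i
  have hi : EndsAt w (t + m + i - i) x := by
    rwa [add_sub_cancel_right, ← takeFirst_future_mem_endsIn_iff hm]
  have hle : lag w (t + m + i) x ≤ i := Nat.sInf_le hi
  have hlag : EndsAt w (t + m + i - lag w (t + m + i) x) x :=
    Nat.sInf_mem (s := {d : ℕ | EndsAt w (t + m + i - d) x}) ⟨i, hi⟩
  rw [future, restartCode]
  generalize lag w (t + m + i) x = d at hle hlag ⊢
  rw [show t + m + i - d = t + (m + i - d : ℕ) by omega] at hlag ⊢
  rw [← takeFirst_future_mem_endsIn_iff (by omega)] at hlag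
  rw [← dropFirst_future, ← hY.dropFirst_eq hw hw0 hlag, dropFirst, dropFirst,
    Nat.sub_add_cancel (by omega)]

variable [MeasurableSpace α] [Countable α] [DiscreteMeasurableSpace α] [MeasurableSpace β]

@[fun_prop]
lemma measurable_lag (n : ℤ) : Measurable (lag w n) :=
  measurable_sInf_nat fun _ => measurable_future _ (measurableSet_startingWith w)

lemma measurable_restartCode {Y : (ℕ → α) → ℕ → β} (hY : Measurable Y) :
    Measurable (restartCode w Y) := by
  refine measurable_pi_lambda _ fun n => ?_
  have h : Measurable fun z : ℕ × (ℤ → α) => Y (future (n - z.1) z.2) z.1 :=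
    measurable_from_prod_countable_right fun d =>
      (measurable_pi_apply d).comp (hY.comp (measurable_future (n - d)))
  exact h.comp ((measurable_lag n).prodMk measurable_id)

variable {μ : Measure (ℤ → α)} {ν : Measure (ℤ → β)} {P : Measure (ℕ → α)} {Q : Measure (ℕ → β)}

lemma measure_future_preimage_le_add_avoiding (hμ : ∀ t, MeasurePreserving (future t) μ P)
    (hν : ∀ t, MeasurePreserving (future t) ν Q) {Y : (ℕ → α) → ℕ → β}
    (hY : MeasurePreserving Y P Q) (hcode : IsBlockCode (endsIn w) Y) (hw : IsUnbordered w)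
    (hw0 : w ≠ []) (t : ℤ) {E : Set (ℕ → β)} (hE : MeasurableSet E) (n : ℕ) :
    ν (future t ⁻¹' E) ≤
      μ (restartCode w Y ⁻¹' (future t ⁻¹' E)) + P (avoiding (endsIn w) n) := by
  obtain ⟨s, rfl⟩ : ∃ s : ℤ, t = s + n := ⟨t - n, (sub_add_cancel _ _).symm⟩
  have hEn : MeasurableSet (dropFirst n ⁻¹' E) := measurable_dropFirst n hE
  calc ν (future (s + n) ⁻¹' E) = ν (future s ⁻¹' (dropFirst n ⁻¹' E)) := by
        simp only [Set.preimage, Set.mem_ofPred_eq, dropFirst_future]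
    _ = μ (future s ⁻¹' (Y ⁻¹' (dropFirst n ⁻¹' E))) := by
        rw [(hν s).measure_preimage hEn.nullMeasurableSet,
          (hμ s).measure_preimage (hY.measurable hEn).nullMeasurableSet,
          hY.measure_preimage hEn.nullMeasurableSet]
    _ ≤ μ (restartCode w Y ⁻¹' (future (s + n) ⁻¹' E) ∪ future s ⁻¹' avoiding (endsIn w) n) := by
        refine measure_mono fun x hx => or_iff_not_imp_right.2 fun hmarker => ?_
        obtain ⟨m, hmn, hm⟩ : ∃ m ≤ n, takeFirst m (future s x) ∈ endsIn w := by
          simpa [avoiding] using hmarker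
        obtain ⟨l, rfl⟩ := Nat.exists_eq_add_of_le hmn
        change dropFirst (m + l) (Y (future s x)) ∈ E at hx
        rwa [← dropFirst_dropFirst, ← future_restartCode hcode hw hw0 hm, dropFirst_future,
          add_assoc, ← Nat.cast_add] at hx
    _ ≤ μ (restartCode w Y ⁻¹' (future (s + n) ⁻¹' E)) + P (avoiding (endsIn w) n) := by
        rw [← (hμ s).measure_preimage (measurableSet_avoiding n).nullMeasurableSet]
        exact measure_union_le _ _

lemma measurePreserving_restartCode [Countable β] [DiscreteMeasurableSpace β]
    [IsProbabilityMeasure μ] [IsProbabilityMeasure ν]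
    (hμ : ∀ t, MeasurePreserving (future t) μ P) (hν : ∀ t, MeasurePreserving (future t) ν Q)
    {Y : (ℕ → α) → ℕ → β} (hY : MeasurePreserving Y P Q) (hcode : IsBlockCode (endsIn w) Y)
    (hw : IsUnbordered w) (hw0 : w ≠ [])
    (hP : Tendsto (fun n => P (avoiding (endsIn w) n)) atTop (nhds 0)) :
    MeasurePreserving (restartCode w Y) μ ν := by
  have hm := measurable_restartCode (w := w) hY.measurable
  have := Measure.isProbabilityMeasure_map (μ := μ) hm.aemeasurable
  refine ⟨hm, (ext_of_future_le fun t E hE => ?_).symm⟩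
  rw [Measure.map_apply hm (measurable_future t hE)]
  simpa using ge_of_tendsto' (tendsto_const_nhds.add hP) fun n =>
    measure_future_preimage_le_add_avoiding hμ hν hY hcode hw hw0 t hE n

end RestartCode

/-! ### Bernoulli measures -/

section Bernoulli

variable {A : Type*} [Fintype A] {p : A → ℝ}

lemma vecEntropy_eq_sum_mul_neg_log (p : A → ℝ) : vecEntropy p = ∑ a, p a * -Real.log (p a) := by
  simp only [vecEntropy, mul_neg, Finset.sum_neg_distrib]

lemma neg_log_nonneg_of_isProbVector (hp : IsProbVector p) (a : A) : 0 ≤ -Real.log (p a) :=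
  neg_nonneg.2 (Real.log_nonpos (hp.1 a).le
    (hp.2 ▸ Finset.single_le_sum (fun b _ => (hp.1 b).le) (Finset.mem_univ a)))

lemma vecEntropy_nonneg (hp : IsProbVector p) : 0 ≤ vecEntropy p := by
  rw [vecEntropy_eq_sum_mul_neg_log]
  exact Finset.sum_nonneg fun a _ => mul_nonneg (hp.1 a).le (neg_log_nonneg_of_isProbVector hp a)

variable [MeasurableSpace A] [DiscreteMeasurableSpace A]

lemma exists_letter_law (hp : IsProbVector p) :
    ∃ π : Measure A, IsProbabilityMeasure π ∧ ∀ a, π {a} = ENNReal.ofReal (p a) := by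
  have hsum : ∑ a, ENNReal.ofReal (p a) = 1 := by
    rw [← ENNReal.ofReal_sum_of_nonneg fun a _ => (hp.1 a).le, hp.2, ENNReal.ofReal_one]
  exact ⟨(PMF.ofFintype _ hsum).toMeasure, inferInstance, fun a =>
    PMF.toMeasure_apply_singleton _ a (.singleton a)⟩

lemma lintegral_info_eq_vecEntropy (hp : IsProbVector p) {π : Measure A}
    (hπ : ∀ a, π {a} = ENNReal.ofReal (p a)) :
    ∫⁻ a, info π a ∂π = ENNReal.ofReal (vecEntropy p / Real.log 2) := by
  have hlog2 := Real.log_pos one_lt_two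
  have hinfo (a : A) : info π a * π {a} =
      ENNReal.ofReal (p a * -Real.log (p a) / Real.log 2) := by
    rw [info, measureReal_def, hπ, ENNReal.toReal_ofReal (hp.1 a).le, mul_comm,
      ← ENNReal.ofReal_mul (hp.1 a).le, Real.logb, ← neg_div, mul_div_assoc]
  rw [lintegral_fintype, Finset.sum_congr rfl fun a _ => hinfo a,
    ← ENNReal.ofReal_sum_of_nonneg fun a _ => div_nonneg (mul_nonneg (hp.1 a).le
      (neg_log_nonneg_of_isProbVector hp a)) hlog2.le,
    vecEntropy_eq_sum_mul_neg_log, Finset.sum_div]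

variable {μ : Measure (ℤ → A)}

lemma eq_infinitePi_of_isBernoulliMeasure (hp : IsProbVector p) (hμ : IsBernoulliMeasure μ p)
    {π : Measure A} [IsProbabilityMeasure π] (hπ : ∀ a, π {a} = ENNReal.ofReal (p a)) :
    μ = Measure.infinitePi fun _ : ℤ => π := by
  obtain ⟨a⟩ := nonempty_of_isProbabilityMeasure π
  have : IsProbabilityMeasure μ := ⟨by simpa using hμ ∅ fun _ => a⟩
  refine ext_of_cylinder_le fun F s => ?_
  have hF : {x : ℤ → A | ∀ i ∈ F, x i = s i} = Set.pi (F : Set ℤ) fun i => {s i} := by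
    ext x
    simp [Set.mem_pi]
  rw [hμ, hF, Measure.infinitePi_pi _ fun i _ => .singleton (s i),
    ENNReal.ofReal_prod_of_nonneg fun i _ => (hp.1 _).le]
  simp only [hπ, le_refl]

lemma exists_eq_infinitePi_of_isBernoulliMeasure (hp : IsProbVector p)
    (hμ : IsBernoulliMeasure μ p) :
    ∃ π : Measure A, IsProbabilityMeasure π ∧ (∀ a, π {a} ≠ 0) ∧
      ∫⁻ a, info π a ∂π = ENNReal.ofReal (vecEntropy p / Real.log 2) ∧
      μ = Measure.infinitePi fun _ : ℤ => π := by
  obtain ⟨π, _, hπ⟩ := exists_letter_law hp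
  exact ⟨π, inferInstance, fun a => by simp [hπ, hp.1 a], lintegral_info_eq_vecEntropy hp hπ,
    eq_infinitePi_of_isBernoulliMeasure hp hμ hπ⟩

end Bernoulli

end BernoulliFactor

open BernoulliFactor in
theorem bernoulli_factor_of_entropy_gt_general {α β : Type*} [Finite α] [MeasurableSpace α]
    [DiscreteMeasurableSpace α] [Countable β] [MeasurableSpace β] [DiscreteMeasurableSpace β]
    {π : Measure α} [IsProbabilityMeasure π] {ρ : Measure β} [IsProbabilityMeasure ρ]
    (hπ : ∀ a, π {a} ≠ 0) (hρ : ∀ b, ρ {b} ≠ 0)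
    (hH : ∫⁻ b, info ρ b ∂ρ < ∫⁻ a, info π a ∂π) :
    ∃ φ : (ℤ → α) → ℤ → β, IsFactorMap (Measure.infinitePi fun _ => π)
      (Measure.infinitePi fun _ => ρ) Set.univ φ := by
  obtain ⟨w, hw0, hw, hL, Y, hY, hcode⟩ := exists_marker_code hπ hρ hH
  have hφ := measurePreserving_restartCode (measurePreserving_future π) (measurePreserving_future ρ)
    hY hcode hw hw0 (ENNReal.tendsto_atTop_zero_of_tsum_ne_top hL)
  exact ⟨restartCode w Y,
    { measurable_map := hφ.measurable
      dom_measurable := .univ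
      dom_shift_invariant := Set.preimage_univ
      dom_full := measure_univ
      pushforward := hφ.map_eq.symm
      equivariant := fun x _ => restartCode_shift Y x }⟩

/-- **Ornstein (unequal entropies).** If `p` and `q` are strictly positive probability
vectors on finite alphabets with `H(p) > H(q)`, then the Bernoulli scheme `BS(q)` is a
homomorphic image (factor) of `BS(p)`. -/
theorem bernoulli_factor_of_entropy_gt
    {A B : Type*} [Fintype A] [Fintype B]
    [MeasurableSpace A] [DiscreteMeasurableSpace A]
    [MeasurableSpace B] [DiscreteMeasurableSpace B]
    (p : A → ℝ) (q : B → ℝ) (hp : IsProbVector p) (hq : IsProbVector q)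
    (μ : Measure (ℤ → A)) (ν : Measure (ℤ → B))
    (hμ : IsBernoulliMeasure μ p) (hν : IsBernoulliMeasure ν q)
    (hH : vecEntropy q < vecEntropy p) :
    ∃ (D : Set (ℤ → A)) (φ : (ℤ → A) → (ℤ → B)), IsFactorMap μ ν D φ := by
  obtain ⟨π, _, hπ, hπH, rfl⟩ := BernoulliFactor.exists_eq_infinitePi_of_isBernoulliMeasure hp hμ
  obtain ⟨ρ, _, hρ, hρH, rfl⟩ := BernoulliFactor.exists_eq_infinitePi_of_isBernoulliMeasure hq hν
  have hpos : 0 < Real.log 2 := Real.log_pos one_lt_two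
  refine ⟨Set.univ, bernoulli_factor_of_entropy_gt_general hπ hρ ?_⟩
  rw [hπH, hρH, ENNReal.ofReal_lt_ofReal_iff_of_nonneg
    (div_nonneg (BernoulliFactor.vecEntropy_nonneg hq) hpos.le)]
  exact div_lt_div_of_pos_right hH hpos
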